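/- Let R be a commutative noetherian ring with identity, let a be a proper ideal of R with dim R/a = 2, and let M be a finitely generated R-module. If the local cohomology module H^{2i+1}_a(M) is a-cofinite for every i ≥ 0, then H^i_a(M) is a-cofinite for every i ≥ 0. -/

import Mathlib

universe u

open CategoryTheory

/-- `Ext^i_R(R/a, M)` as an `R`-module, for `M : ModuleCat R`. -/
noncomputable def extQuot {R : Type u} [CommRing R] (a : Ideal R) (i : ℕ)
    (M : ModuleCat.{u} R) : ModuleCat.{u} R :=
  ((Ext R (ModuleCat.{u} R) i).obj (Opposite.op (ModuleCat.of R (R ⧸ a)))).obj M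

/-- An `R`-module `M` is `a`-cofinite if `Supp M ⊆ V(a)` and `Ext^i_R(R/a, M)` is a
finitely generated `R`-module for every `i ≥ 0`. -/
def IsCofinite {R : Type u} [CommRing R] (a : Ideal R) (M : ModuleCat.{u} R) : Prop :=
  Module.support R M ⊆ PrimeSpectrum.zeroLocus (a : Set R) ∧
    ∀ i : ℕ, Module.Finite R (extQuot a i M)

namespace Cof

section A

variable {R : Type u} [CommRing R]

/-- `0 :_X a`. -/
def tb (a : Ideal R) (X : Type u) [AddCommGroup X] [Module R X] : Submodule R X where
  carrier := {x | ∀ r ∈ a, r • x = 0}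
  add_mem' := by
    intro x y hx hy r hr
    rw [smul_add, hx r hr, hy r hr, add_zero]
  zero_mem' := fun r _ => smul_zero r
  smul_mem' := by
    intro c x hx r hr
    rw [smul_comm, hx r hr, smul_zero]

theorem mem_tb {a : Ideal R} {X : Type u} [AddCommGroup X] [Module R X] {x : X} :
    x ∈ tb a X ↔ ∀ r ∈ a, r • x = 0 := Iff.rfl

/-- finitely generated up to support in `D`. -/
def FGm (D : Set (PrimeSpectrum R)) (X : Type u) [AddCommGroup X] [Module R X] : Prop :=
  ∃ X0 : Submodule R X, X0.FG ∧ ∀ p : PrimeSpectrum R, p ∉ D → ∀ x : X,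
    ∃ s : R, s ∉ p.asIdeal ∧ s • x ∈ X0

/-- torsion -/
def IsTors (a : Ideal R) (X : Type u) [AddCommGroup X] [Module R X] : Prop :=
  ∀ x : X, ∃ n : ℕ, ∀ r ∈ a ^ n, r • x = 0

variable {X Y Z : Type u} [AddCommGroup X] [Module R X] [AddCommGroup Y] [Module R Y]
  [AddCommGroup Z] [Module R Z]

theorem IsTors.of_inj {a : Ideal R} (f : X →ₗ[R] Y) (hf : Function.Injective f)
    (h : IsTors a Y) : IsTors a X := by
  intro x
  obtain ⟨n, hn⟩ := h (f x)
  refine ⟨n, fun r hr => hf ?_⟩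
  rw [map_smul, hn r hr, map_zero]

theorem IsTors.of_surj {a : Ideal R} (f : X →ₗ[R] Y) (hf : Function.Surjective f)
    (h : IsTors a X) : IsTors a Y := by
  intro y
  obtain ⟨x, rfl⟩ := hf y
  obtain ⟨n, hn⟩ := h x
  refine ⟨n, fun r hr => ?_⟩
  rw [← map_smul, hn r hr, map_zero]

theorem IsTors.mono {a b : Ideal R} (hab : b ≤ a) (h : IsTors a X) : IsTors b X := by
  intro x
  obtain ⟨n, hn⟩ := h x
  exact ⟨n, fun r hr => hn r (Ideal.pow_right_mono hab n hr)⟩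

theorem FGm.mono {D D' : Set (PrimeSpectrum R)} (h : D ⊆ D') (hX : FGm D X) : FGm D' X := by
  obtain ⟨X0, h0, h1⟩ := hX
  exact ⟨X0, h0, fun p hp x => h1 p (fun hh => hp (h hh)) x⟩

theorem FGm.of_finite (D : Set (PrimeSpectrum R)) (h : Module.Finite R X) : FGm D X :=
  ⟨⊤, h.fg_top, fun p _ _ => ⟨1, (Ideal.ne_top_iff_one _).1 p.2.ne_top, trivial⟩⟩

theorem FGm.finite (h : FGm (∅ : Set (PrimeSpectrum R)) X) : Module.Finite R X := by
  obtain ⟨X0, h0, h1⟩ := h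
  suffices X0 = ⊤ by rw [this] at h0; exact ⟨h0⟩
  rw [eq_top_iff]
  intro x _
  let I : Ideal R := X0.comap (LinearMap.toSpanSingleton R X x)
  by_cases hI : I = ⊤
  · have : (1 : R) ∈ I := by rw [hI]; trivial
    simpa [I] using this
  · obtain ⟨m, hm, hIm⟩ := Ideal.exists_le_maximal I hI
    obtain ⟨s, hs, hsx⟩ := h1 ⟨m, hm.isPrime⟩ (by simp) x
    exact absurd (hIm (show s ∈ I by simpa [I] using hsx)) hs

theorem FGm.of_inj [IsNoetherianRing R] {D : Set (PrimeSpectrum R)} (f : X →ₗ[R] Y)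
    (hf : Function.Injective f) (h : FGm D Y) : FGm D X := by
  obtain ⟨Y0, h0, h1⟩ := h
  refine ⟨Y0.comap f, ?_, ?_⟩
  · have : Module.Finite R Y0 := ⟨(Submodule.fg_top _).2 h0⟩
    have : Module.Finite R (Y0.comap f) := by
      refine Module.Finite.of_injective
        ((f.comp (Y0.comap f).subtype).codRestrict Y0 (fun x => x.2)) ?_
      intro x y hxy
      have := congrArg Subtype.val hxy
      exact Subtype.ext (hf this)
    exact (Submodule.fg_top _).1 this.fg_top
  · intro p hp x
    obtain ⟨s, hs, hx⟩ := h1 p hp (f x)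
    exact ⟨s, hs, by simpa using hx⟩

theorem FGm.of_surj {D : Set (PrimeSpectrum R)} (f : X →ₗ[R] Y)
    (hf : Function.Surjective f) (h : FGm D X) : FGm D Y := by
  obtain ⟨X0, h0, h1⟩ := h
  refine ⟨X0.map f, h0.map f, ?_⟩
  intro p hp y
  obtain ⟨x, rfl⟩ := hf y
  obtain ⟨s, hs, hx⟩ := h1 p hp x
  exact ⟨s, hs, by rw [← map_smul]; exact Submodule.mem_map_of_mem hx⟩

theorem FGm.of_exact' [IsNoetherianRing R] {D : Set (PrimeSpectrum R)} (f : X →ₗ[R] Y)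
    (g : Y →ₗ[R] Z) (hg : Function.Surjective g) (hfg : LinearMap.ker g ≤ LinearMap.range f)
    (hX : FGm D X) (hZ : FGm D Z) : FGm D Y := by
  obtain ⟨X0, h0, h1⟩ := hX
  obtain ⟨Z0, h2, h3⟩ := hZ
  obtain ⟨t, rfl⟩ := h2
  choose l hl using hg
  have : (Submodule.span R (l '' (t : Set Z))).map g = Submodule.span R (t : Set Z) := by
    rw [Submodule.map_span, Set.image_image]
    simp [hl]
  refine ⟨X0.map f ⊔ Submodule.span R (l '' (t : Set Z)), ?_, ?_⟩
  · exact (h0.map f).sup (Submodule.fg_span (t.finite_toSet.image l))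
  · intro p hp y
    obtain ⟨s, hs, hy⟩ := h3 p hp (g y)
    rw [← this] at hy
    obtain ⟨w, hw, hwy⟩ := hy
    obtain ⟨x, hx⟩ := hfg (show s • y - w ∈ LinearMap.ker g by simp [hwy])
    obtain ⟨s', hs', hx'⟩ := h1 p hp x
    refine ⟨s' * s, fun h => (p.2.mem_or_mem h).elim hs' hs, ?_⟩
    have : (s' * s) • y = f (s' • x) + s' • w := by
      rw [map_smul, hx, smul_sub, mul_smul]; abel
    rw [this]
    exact add_mem (Submodule.mem_sup_left (Submodule.mem_map_of_mem hx'))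
      (Submodule.mem_sup_right (Submodule.smul_mem _ _ hw))

theorem FGm.of_exact [IsNoetherianRing R] {D : Set (PrimeSpectrum R)} (f : X →ₗ[R] Y)
    (g : Y →ₗ[R] Z) (hfg : LinearMap.ker g ≤ LinearMap.range f)
    (hX : FGm D X) (hZ : FGm D Z) : FGm D Y := by
  refine FGm.of_exact' f g.rangeRestrict g.surjective_rangeRestrict ?_ hX
    (FGm.of_inj (LinearMap.range g).subtype (Submodule.injective_subtype _) hZ)
  rw [LinearMap.ker_rangeRestrict]; exact hfg

theorem FGm.pi [IsNoetherianRing R] {D : Set (PrimeSpectrum R)} (n : ℕ) (h : FGm D X) :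
    FGm D (Fin n → X) := by
  induction n with
  | zero => exact FGm.of_finite D inferInstance
  | succ n ih =>
    refine FGm.of_exact (X := X) (Z := Fin n → X) (LinearMap.single R (fun _ => X) 0)
      (LinearMap.funLeft R X Fin.succ) ?_ h ih
    intro v hv
    refine ⟨v 0, ?_⟩
    ext i
    refine Fin.cases ?_ (fun j => ?_) i
    · simp
    · have := congrFun (LinearMap.mem_ker.1 hv) j
      simp only [LinearMap.funLeft_apply, Pi.zero_apply] at this
      simp [this]

/-- finite generation by multiplication by generators of `a` -/
theorem FGm.of_mul [IsNoetherianRing R] {D : Set (PrimeSpectrum R)} (a : Ideal R)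
    (S T : Submodule R X) (hT : FGm D T) (hk : FGm D (tb a X))
    (h : ∀ x ∈ S, ∀ r ∈ a, r • x ∈ T) : FGm D S := by
  obtain ⟨n, g, hg⟩ := Submodule.fg_iff_exists_fin_generating_family.1 (IsNoetherian.noetherian a)
  have hga : ∀ i, g i ∈ a := fun i => by
    rw [← hg]; exact Submodule.subset_span ⟨i, rfl⟩
  let φ : S →ₗ[R] (Fin n → T) := LinearMap.pi fun i =>
    ((LinearMap.lsmul R X (g i)).comp S.subtype).codRestrict T (fun x => h x x.2 _ (hga i))
  have hker : FGm D (LinearMap.ker φ) := by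
    refine FGm.of_inj (Y := tb a X) ((S.subtype.comp (LinearMap.ker φ).subtype).codRestrict _ ?_) ?_ hk
    · intro x r hr
      have hx : ∀ i, g i • (x.1.1) = 0 := fun i => congrArg Subtype.val (congrFun x.2 i)
      rw [← hg] at hr
      induction hr using Submodule.span_induction with
      | mem r hr => obtain ⟨i, rfl⟩ := hr; exact hx i
      | zero => simp
      | add r s _ _ h1 h2 => rw [add_smul, h1, h2, add_zero]
      | smul c r _ h1 => rw [smul_eq_mul, mul_smul, h1, smul_zero]
    · intro x y hxy
      have h1 : x.1.1 = y.1.1 := congrArg (tb a X).subtype hxy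
      exact Subtype.ext (Subtype.ext h1)
  refine FGm.of_exact (LinearMap.ker φ).subtype φ ?_ hker (FGm.pi n hT)
  simp

/-- `a^k X = 0` and `0:_X a` f.g. implies `X` f.g. -/
theorem FGm.of_pow [IsNoetherianRing R] {D : Set (PrimeSpectrum R)} (a : Ideal R)
    (hk : FGm D (tb a X)) (k : ℕ) (h : ∀ x : X, ∀ r ∈ a ^ k, r • x = 0) : FGm D X := by
  have key : ∀ k : ℕ, FGm D (tb (a ^ k) X) := by
    intro k
    induction k with
    | zero =>
      have : Subsingleton (tb (a ^ 0) X) := ⟨fun x y => Subtype.ext (by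
        have hx := x.2 1 (by simp)
        have hy := y.2 1 (by simp)
        simp only [one_smul] at hx hy
        rw [hx, hy])⟩
      exact FGm.of_finite D inferInstance
    | succ k ih =>
      refine FGm.of_mul a _ (tb (a ^ k) X) ih hk ?_
      intro x hx r hr s hs
      rw [← mul_smul]
      exact hx _ (by rw [pow_succ]; exact Ideal.mul_mem_mul hs hr)
  refine FGm.of_surj (tb (a ^ k) X).subtype ?_ (key k)
  intro x
  exact ⟨⟨x, h x⟩, rfl⟩

end A

section Mel

variable {R : Type u} [CommRing R] {X : Type u} [AddCommGroup X] [Module R X]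

/-- Melkersson lemma, principal case. -/
theorem artinian_of_principal (x : R) (ht : ∀ u : X, ∃ n : ℕ, x ^ n • u = 0)
    (h : IsArtinian R (LinearMap.ker (LinearMap.lsmul R X x))) : IsArtinian R X := by
  let K := LinearMap.ker (LinearMap.lsmul R X x)
  let Yk : ℕ → Submodule R X → Submodule R X := fun k S =>
    (S ⊓ LinearMap.ker (LinearMap.lsmul R X (x ^ (k+1)))).map (LinearMap.lsmul R X (x ^ k))
  have mem_Yk : ∀ k S y, y ∈ Yk k S ↔ ∃ u ∈ S, x ^ (k+1) • u = 0 ∧ x ^ k • u = y := by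
    intro k S y
    simp [Yk, and_assoc]
  have YK : ∀ k S, Yk k S ≤ K := by
    intro k S y hy
    obtain ⟨u, _, hu, rfl⟩ := (mem_Yk _ _ _).1 hy
    simp only [K, LinearMap.mem_ker, LinearMap.lsmul_apply]
    rw [← mul_smul, ← pow_succ', hu]
  have Yanti : ∀ S, Antitone fun k => Yk k S := by
    intro S
    refine antitone_nat_of_succ_le fun k => ?_
    intro y hy
    obtain ⟨u, hu, hu1, rfl⟩ := (mem_Yk _ _ _).1 hy
    refine (mem_Yk _ _ _).2 ⟨x • u, S.smul_mem _ hu, ?_, ?_⟩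
    · rw [← mul_smul, ← pow_succ]; exact hu1
    · rw [← mul_smul, ← pow_succ]
  have Ymono : ∀ k S T, S ≤ T → Yk k S ≤ Yk k T := by
    intro k S T hST y hy
    obtain ⟨u, hu, h1, h2⟩ := (mem_Yk _ _ _).1 hy
    exact (mem_Yk _ _ _).2 ⟨u, hST hu, h1, h2⟩
  have key : ∀ S T, S ≤ T → (∀ k, Yk k S = Yk k T) → S = T := by
    intro S T hST hY
    refine le_antisymm hST ?_
    have : ∀ k, ∀ u ∈ T, x ^ k • u = 0 → u ∈ S := by
      intro k
      induction k with
      | zero => intro u _ hu; simp at hu; rw [hu]; exact S.zero_mem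
      | succ k ih =>
        intro u hu hk
        have : x ^ k • u ∈ Yk k S := by
          rw [hY]; exact (mem_Yk _ _ _).2 ⟨u, hu, hk, rfl⟩
        obtain ⟨v, hv, hv1, hv2⟩ := (mem_Yk _ _ _).1 this
        have h3 : u - v ∈ S := ih (u - v) (T.sub_mem hu (hST hv)) (by rw [smul_sub, hv2, sub_self])
        simpa using S.add_mem h3 hv
    intro u hu
    obtain ⟨n, hn⟩ := ht u
    exact this n u hu hn
  -- stabilisation in `K`
  have stab : ∀ f : ℕ → Submodule R X, Antitone f → (∀ n, f n ≤ K) →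
      ∃ n, ∀ m, n ≤ m → f n = f m := by
    intro f hf hK
    obtain ⟨n, hn⟩ := monotone_stabilizes_iff_artinian.2 h
      ⟨fun n => OrderDual.toDual ((f n).comap K.subtype), fun a b hab =>
        OrderDual.toDual_le_toDual.2 (Submodule.comap_mono (hf hab))⟩
    refine ⟨n, fun m hm => ?_⟩
    have := hn m hm
    have h2 : (f n).comap K.subtype = (f m).comap K.subtype := this
    have h3 := congrArg (Submodule.map K.subtype) h2
    rw [Submodule.map_comap_subtype, Submodule.map_comap_subtype] at h3
    rwa [inf_eq_right.2 (hK n), inf_eq_right.2 (hK m)] at h3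
  rw [← monotone_stabilizes_iff_artinian]
  intro f
  let g : ℕ → Submodule R X := fun n => OrderDual.ofDual (f n)
  have hg : Antitone g := fun a b hab => OrderDual.ofDual_le_ofDual.2 (f.monotone hab)
  suffices ∃ n, ∀ m, n ≤ m → g n = g m from this
  obtain ⟨n0, hn0⟩ := stab (fun n => Yk n (g n))
    (fun a b hab => (Yanti _ hab).trans (Ymono _ _ _ (hg hab))) (fun n => YK _ _)
  have hj : ∀ k, ∃ n, ∀ m, n ≤ m → Yk k (g n) = Yk k (g m) := fun k =>
    stab (fun n => Yk k (g n)) (fun a b hab => Ymono _ _ _ (hg hab)) (fun n => YK _ _)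
  choose j hj using hj
  let N := max n0 ((Finset.range n0).sup j)
  refine ⟨N, fun m hm => (key _ _ (hg hm) fun k => ?_).symm⟩
  by_cases hk : k < n0
  · have h1 : j k ≤ N := le_trans (Finset.le_sup (f := j) (Finset.mem_range.2 hk)) (le_max_right _ _)
    rw [← hj k N h1, ← hj k m (h1.trans hm)]
  · push Not at hk
    have h0 : n0 ≤ N := le_max_left _ _
    have e : ∀ i, n0 ≤ i → Yk k (g i) = Yk n0 (g n0) := by
      intro i hi
      refine le_antisymm ((Yanti _ hk).trans (Ymono _ _ _ (hg hi))) ?_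
      have : Yk n0 (g n0) = Yk (max i k) (g (max i k)) :=
        hn0 (max i k) (hi.trans (le_max_left _ _))
      rw [this]
      exact (Yanti _ (le_max_right i k)).trans (Ymono _ _ _ (hg (le_max_left i k)))
    rw [e N h0, e m (h0.trans hm)]

end Mel

theorem artinian_of_finset {R : Type u} [CommRing R] (s : Finset R) :
    ∀ (X : Type u) [AddCommGroup X] [Module R X], (∀ x ∈ s, ∀ u : X, ∃ n : ℕ, x ^ n • u = 0) →
    (∀ S : Submodule R X, (∀ u ∈ S, ∀ x ∈ s, x • u = 0) → IsArtinian R S) → IsArtinian R X := by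
  classical
  induction s using Finset.induction_on with
  | empty =>
    intro X _ _ _ h
    have := h ⊤ (by simp)
    exact isArtinian_of_linearEquiv (Submodule.topEquiv (R := R) (M := X))
  | insert x s hx ih =>
    intro X _ _ ht h
    refine artinian_of_principal x (ht x (by simp)) ?_
    refine ih _ ?_ ?_
    · intro y hy u
      obtain ⟨n, hn⟩ := ht y (by simp [hy]) u.1
      exact ⟨n, Subtype.ext hn⟩
    · intro S hS
      have h1 := h (S.map (Submodule.subtype _)) (by
        rintro u ⟨v, hv, rfl⟩ y hy
        rcases Finset.mem_insert.1 hy with rfl | hy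
        · exact v.2
        · exact congrArg Subtype.val (hS v hv y hy))
      exact isArtinian_of_linearEquiv (Submodule.equivMapOfInjective _
        (Submodule.injective_subtype _) S).symm

theorem artinian_of_tors {R : Type u} [CommRing R] [IsNoetherianRing R] (a : Ideal R)
    (X : Type u) [AddCommGroup X] [Module R X] (ht : IsTors a X) (h : IsArtinian R (tb a X)) :
    IsArtinian R X := by
  obtain ⟨s, hs⟩ := IsNoetherian.noetherian a
  refine artinian_of_finset s X ?_ ?_
  · intro x hx u
    obtain ⟨n, hn⟩ := ht u
    exact ⟨n, hn _ (Ideal.pow_mem_pow (by rw [← hs]; exact Submodule.subset_span hx) n)⟩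
  · intro S hS
    have hle : S ≤ tb a X := by
      intro u hu r hr
      rw [← hs] at hr
      induction hr using Submodule.span_induction with
      | mem r hr => exact hS u hu r hr
      | zero => simp
      | add r s _ _ h1 h2 => rw [add_smul, h1, h2, add_zero]
      | smul c r _ h1 => rw [smul_eq_mul, mul_smul, h1, smul_zero]
    exact isArtinian_of_injective (Submodule.inclusion hle) (Submodule.inclusion_injective hle)

end Cof

namespace Cof

section Sec

variable {A : Type u} [CommRing A] [IsNoetherianRing A] {V : Type u} [AddCommGroup V] [Module A V]

theorem tb_finite_sub (b : Ideal A) (S : Submodule A V) {D : Set (PrimeSpectrum A)}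
    (h : FGm D (tb b V)) : FGm D (tb b S) := by
  refine FGm.of_inj (Y := tb b V) ((S.subtype.comp (tb b S).subtype).codRestrict _ ?_) ?_ h
  · intro x r hr
    exact congrArg Subtype.val (x.2 r hr)
  · intro x y hxy
    have h1 : x.1.1 = y.1.1 := congrArg (tb b V).subtype hxy
    exact Subtype.ext (Subtype.ext h1)

/-- consequence of secondary representation for Artinian modules. -/
theorem sec_exists [IsArtinian A V] (b : Ideal A) (hb : FGm (∅ : Set (PrimeSpectrum A)) (tb b V)) :
    ∃ P : Set (Ideal A), P.Finite ∧ (∀ p ∈ P, p.IsPrime ∧ ¬ b ≤ p) ∧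
      ∀ x ∈ b, (∀ p ∈ P, x ∉ p) → ∃ V' : Submodule A V, V'.FG ∧ ∀ v : V, ∃ w : V, v - x • w ∈ V' := by
  suffices H : ∀ S : Submodule A V, ∃ P : Set (Ideal A), P.Finite ∧ (∀ p ∈ P, p.IsPrime ∧ ¬ b ≤ p) ∧
      ∀ x ∈ b, (∀ p ∈ P, x ∉ p) → ∃ V' : Submodule A V, V'.FG ∧ ∀ v ∈ S, ∃ w ∈ S, v - x • w ∈ V' by
    obtain ⟨P, h1, h2, h3⟩ := H ⊤
    refine ⟨P, h1, h2, fun x hx hP => ?_⟩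
    obtain ⟨V', h4, h5⟩ := h3 x hx hP
    exact ⟨V', h4, fun v => by obtain ⟨w, _, hw⟩ := h5 v trivial; exact ⟨w, hw⟩⟩
  intro S
  induction S using WellFoundedLT.induction with
  | ind S ih =>
  by_cases hdec : ∃ S1 S2 : Submodule A V, S1 < S ∧ S2 < S ∧ S1 ⊔ S2 = S
  · obtain ⟨S1, S2, h1, h2, h3⟩ := hdec
    obtain ⟨P1, a1, a2, a3⟩ := ih S1 h1
    obtain ⟨P2, b1, b2, b3⟩ := ih S2 h2
    refine ⟨P1 ∪ P2, a1.union b1, ?_, ?_⟩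
    · rintro p (hp | hp)
      exacts [a2 p hp, b2 p hp]
    · intro x hx hP
      obtain ⟨V1, c1, c2⟩ := a3 x hx (fun p hp => hP p (Or.inl hp))
      obtain ⟨V2, d1, d2⟩ := b3 x hx (fun p hp => hP p (Or.inr hp))
      refine ⟨V1 ⊔ V2, c1.sup d1, ?_⟩
      intro v hv
      rw [← h3] at hv
      obtain ⟨v1, hv1, v2, hv2, rfl⟩ := Submodule.mem_sup.1 hv
      obtain ⟨w1, e1, e2⟩ := c2 v1 hv1
      obtain ⟨w2, f1, f2⟩ := d2 v2 hv2
      refine ⟨w1 + w2, S.add_mem (h1.le e1) (h2.le f1), ?_⟩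
      have : v1 + v2 - x • (w1 + w2) = (v1 - x • w1) + (v2 - x • w2) := by
        rw [smul_add]; abel
      rw [this]
      exact add_mem (Submodule.mem_sup_left e2) (Submodule.mem_sup_right f2)
  · by_cases hS : S = ⊥
    · refine ⟨∅, Set.finite_empty, by simp, fun x _ _ => ⟨⊥, Submodule.fg_bot, ?_⟩⟩
      intro v hv
      rw [hS] at hv
      have hv : v = 0 := by simpa using hv
      exact ⟨0, S.zero_mem, by simp [hv]⟩
    have dich : ∀ r : A, (∀ v ∈ S, ∃ w ∈ S, r • w = v) ∨ ∃ n : ℕ, ∀ v ∈ S, r ^ n • v = 0 := by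
      intro r
      obtain ⟨n, hn, hn1⟩ := ((LinearMap.eventually_codisjoint_ker_pow_range_pow
        (algebraMap A (Module.End A S) r)).and (Filter.eventually_ge_atTop 1)).exists
      rw [← map_pow] at hn
      set f := algebraMap A (Module.End A S) (r ^ n) with hf
      have hfa : ∀ v : S, f v = r ^ n • v := fun v => by rw [hf, Module.algebraMap_end_apply]
      by_contra hcon
      push Not at hcon
      obtain ⟨⟨v, hv, hv'⟩, hcon⟩ := hcon
      obtain ⟨v2, hv2, hv2'⟩ := hcon n
      apply hdec
      refine ⟨(LinearMap.ker f).map S.subtype, (LinearMap.range f).map S.subtype, ?_, ?_, ?_⟩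
      · refine lt_of_le_of_ne (Submodule.map_subtype_le _ _) fun he => hv2' ?_
        rw [← he] at hv2
        obtain ⟨w, hw, rfl⟩ := hv2
        have : f w = 0 := hw
        rw [hfa] at this
        exact congrArg Subtype.val this
      · refine lt_of_le_of_ne (Submodule.map_subtype_le _ _) fun he => ?_
        have hv3 := hv
        rw [← he] at hv3
        obtain ⟨w, ⟨z, rfl⟩, hw⟩ := hv3
        refine hv' (r ^ (n - 1) • z) (S.smul_mem _ z.2) ?_
        rw [← mul_smul, ← pow_succ', Nat.sub_add_cancel hn1, ← hw]
        rw [hfa]; rfl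
      · rw [← Submodule.map_sup, codisjoint_iff.1 hn, Submodule.map_subtype_top]
    let p : Ideal A := S.annihilator.radical
    have mem_p : ∀ r, r ∈ p ↔ ∃ n : ℕ, ∀ v ∈ S, r ^ n • v = 0 := by
      intro r
      simp only [p, Ideal.radical, Submodule.mem_annihilator]
      rfl
    have hdiv : ∀ r, r ∉ p → ∀ v ∈ S, ∃ w ∈ S, r • w = v := fun r hr =>
      (dich r).resolve_right (fun h => hr ((mem_p r).2 h))
    have hprime : p.IsPrime := by
      constructor
      · intro h
        obtain ⟨n, hn⟩ := (mem_p 1).1 (by rw [h]; trivial)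
        apply hS
        rw [eq_bot_iff]
        intro v hv
        simpa using hn v hv
      · intro r s hrs
        by_contra hcon
        push Not at hcon
        obtain ⟨n, hn⟩ := (mem_p _).1 hrs
        apply hcon.2
        rw [mem_p]
        refine ⟨n, fun v hv => ?_⟩
        have hd : ∀ k : ℕ, ∀ v ∈ S, ∃ w ∈ S, r ^ k • w = v := by
          intro k
          induction k with
          | zero => intro v hv; exact ⟨v, hv, by simp⟩
          | succ k ihk =>
            intro v hv
            obtain ⟨w, hw, rfl⟩ := ihk v hv
            obtain ⟨w', hw', rfl⟩ := hdiv r hcon.1 w hw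
            exact ⟨w', hw', by rw [pow_succ, mul_smul]⟩
        obtain ⟨w, hw, rfl⟩ := hd n v hv
        rw [← mul_smul, ← mul_pow, mul_comm s r]
        exact hn w hw
    by_cases hbp : b ≤ p
    · obtain ⟨k, hk⟩ := Ideal.exists_pow_le_of_le_radical_of_fg hbp (IsNoetherian.noetherian b)
      have : FGm (∅ : Set (PrimeSpectrum A)) S := by
        refine FGm.of_pow b (tb_finite_sub b S hb) k ?_
        intro x r hr
        exact Subtype.ext (Submodule.mem_annihilator.1 (hk hr) x x.2)
      refine ⟨∅, Set.finite_empty, by simp, fun x _ _ => ⟨S, (Submodule.fg_top _).1 this.finite.fg_top, ?_⟩⟩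
      intro v hv
      exact ⟨0, S.zero_mem, by simpa using hv⟩
    · refine ⟨{p}, Set.finite_singleton p, ?_, ?_⟩
      · rintro q rfl
        exact ⟨hprime, hbp⟩
      · intro x _ hx
        refine ⟨⊥, Submodule.fg_bot, fun v hv => ?_⟩
        obtain ⟨w, hw, rfl⟩ := hdiv x (hx p rfl) v hv
        exact ⟨w, hw, by simp⟩

end Sec
end Cof

namespace Cof

theorem artinian_of_killed {A : Type u} [CommRing A] [IsNoetherianRing A] (W : Type u)
    [AddCommGroup W] [Module A W] [Module.Finite A W] (c : Ideal A)
    (hc : ∀ p : Ideal A, p.IsPrime → c ≤ p → p.IsMaximal) (hW : ∀ w : W, ∀ r ∈ c, r • w = 0) :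
    IsArtinian A W := by
  have hart : IsArtinianRing (A ⧸ c) := by
    rw [isArtinianRing_iff_krullDimLE_zero, Ring.krullDimLE_zero_iff]
    intro I hI
    have h1 : (I.comap (Ideal.Quotient.mk c)).IsMaximal := by
      apply hc _ (Ideal.comap_isPrime _ _)
      intro x hx
      rw [Ideal.mem_comap, Ideal.Quotient.eq_zero_iff_mem.2 hx]
      exact I.zero_mem
    have := Ideal.map_eq_top_or_isMaximal_of_surjective (Ideal.Quotient.mk c)
      Ideal.Quotient.mk_surjective h1
    rw [Ideal.map_comap_of_surjective _ Ideal.Quotient.mk_surjective] at this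
    exact this.resolve_left hI.ne_top
  have ht : Module.IsTorsionBySet A W (c : Set A) := fun w r => hW w r r.2
  let : Module (A ⧸ c) W := ht.module
  have : IsScalarTower A (A ⧸ c) W := ht.isScalarTower
  have : Module.Finite (A ⧸ c) W := Module.Finite.of_restrictScalars_finite A _ _
  exact isArtinian_of_surjective_algebraMap (R := A ⧸ c) Ideal.Quotient.mk_surjective

theorem IsTors.of_gens {R : Type u} [CommRing R] {M : Type u} [AddCommGroup M] [Module R M]
    (q : Ideal R) [q.IsPrime] (f : M)
    (T : Finset R) (h : ∀ r ∈ T, ∃ s, s ∉ q ∧ s • r • f = 0) :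
    ∃ s, s ∉ q ∧ ∀ r ∈ Ideal.span (T : Set R), r • s • f = 0 := by
  classical
  suffices H : ∃ s, s ∉ q ∧ ∀ r ∈ T, r • s • f = 0 by
    obtain ⟨s, hs, h1⟩ := H
    refine ⟨s, hs, fun r hr => ?_⟩
    induction hr using Submodule.span_induction with
    | mem r hr => exact h1 r hr
    | zero => simp
    | add r s _ _ h1 h2 => rw [add_smul, h1, h2, add_zero]
    | smul c r _ h1 => rw [smul_eq_mul, mul_smul, h1, smul_zero]
  induction T using Finset.induction_on with
  | empty => exact ⟨1, (Ideal.ne_top_iff_one _).1 (Ideal.IsPrime.ne_top ‹_›), by simp⟩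
  | insert x T hx ih =>
    obtain ⟨s, hs, h1⟩ := ih (fun r hr => h r (by simp [hr]))
    obtain ⟨t, ht, h2⟩ := h x (by simp)
    refine ⟨s * t, fun hh => (Ideal.IsPrime.mem_or_mem ‹_› hh).elim hs ht, fun r hr => ?_⟩
    rcases Finset.mem_insert.1 hr with rfl | hr
    · rw [mul_smul, smul_comm r s, smul_comm r t, h2, smul_zero]
    · rw [mul_comm, mul_smul, smul_comm r t, h1 r hr, smul_zero]

section Loc

variable {R : Type u} [CommRing R] [IsNoetherianRing R]

theorem good_local (a : Ideal R) (F : Type u) [AddCommGroup F] [Module R F] (hF : IsTors a F)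
    (q : Ideal R) [hq : q.IsPrime] (W0 : Submodule R F) (hW0 : W0.FG) (hW0a : W0 ≤ tb a F)
    (hmin : q ∈ W0.annihilator.minimalPrimes)
    (hW : ∀ f ∈ tb a F, ∃ s, s ∉ q ∧ s • f ∈ W0) :
    ∃ P : Set (Ideal R), P.Finite ∧ (∀ p ∈ P, p.IsPrime ∧ ¬ a ≤ p) ∧
      ∀ x ∈ a, (∀ p ∈ P, x ∉ p) → ∃ F' : Submodule R F, F'.FG ∧
        ∀ f : F, ∃ s, s ∉ q ∧ ∃ w : F, s • f - x • w ∈ F' := by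
  let A := Localization.AtPrime q
  let V := LocalizedModule q.primeCompl F
  let ι : F →ₗ[R] V := LocalizedModule.mkLinearMap q.primeCompl F
  let b : Ideal A := a.map (algebraMap R A)
  have : IsNoetherianRing A := IsLocalization.isNoetherianRing q.primeCompl A inferInstance
  have hmemL : ∀ (N : Submodule R F) (v : V), v ∈ N.localized' A q.primeCompl ι ↔
      ∃ m ∈ N, ∃ s : q.primeCompl, LocalizedModule.mk m s = v := by
    intro N v
    rw [Submodule.mem_localized']
    refine exists_congr fun m => and_congr_right fun _ => exists_congr fun s => ?_
    rw [show LocalizedModule.mk m s = IsLocalizedModule.mk' ι m s from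
      IsLocalizedModule.mk_eq_mk' s m]
  have hLfg : ∀ N : Submodule R F, N.FG → (N.localized' A q.primeCompl ι).FG := by
    rintro N ⟨T, rfl⟩
    rw [Submodule.localized'_span]
    exact Submodule.fg_span (T.finite_toSet.image _)
  have hsub : tb b V ≤ W0.localized' A q.primeCompl ι := by
    intro v hv
    induction v using LocalizedModule.induction_on with
    | h f t =>
    obtain ⟨T, hT⟩ := IsNoetherian.noetherian a
    obtain ⟨s, hs, hs1⟩ := IsTors.of_gens q f T (by
      intro r hr
      have hra : r ∈ a := by rw [← hT]; exact Submodule.subset_span hr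
      have h1 := hv (algebraMap R A r) (Ideal.mem_map_of_mem _ hra)
      rw [algebraMap_smul, LocalizedModule.smul'_mk, ← LocalizedModule.zero_mk t,
        LocalizedModule.mk_eq] at h1
      obtain ⟨w, hw⟩ := h1
      refine ⟨w * t, ?_, ?_⟩
      · exact (w * t).2
      · simpa [Submonoid.smul_def, mul_smul] using hw)
    have hsf : s • f ∈ tb a F := by
      intro r hr
      exact hs1 r (by rw [← hT] at hr; exact hr)
    obtain ⟨s', hs', h3⟩ := hW _ hsf
    rw [hmemL]
    let ss : q.primeCompl := ⟨s' * s, fun hh => (hq.mem_or_mem hh).elim hs' hs⟩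
    refine ⟨s' • s • f, h3, ss * t, ?_⟩
    rw [← mul_smul]
    exact LocalizedModule.mk_cancel_common_left ss t f
  have hfin : Module.Finite A (tb b V) := by
    have : Module.Finite A (W0.localized' A q.primeCompl ι) :=
      ⟨(Submodule.fg_top _).2 (hLfg W0 hW0)⟩
    exact Module.Finite.of_injective (Submodule.inclusion hsub) (Submodule.inclusion_injective _)
  have hart0 : IsArtinian A (tb b V) := by
    refine artinian_of_killed _ (W0.annihilator.map (algebraMap R A)) ?_ ?_
    · intro p hp hle
      have h1 : W0.annihilator ≤ p.comap (algebraMap R A) := Ideal.map_le_iff_le_comap.1 hle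
      have h2 : p ≤ IsLocalRing.maximalIdeal A := IsLocalRing.le_maximalIdeal hp.ne_top
      have h3 : p.comap (algebraMap R A) ≤ q := by
        have h6 := Ideal.comap_mono (f := algebraMap R A) h2
        exact h6.trans (Localization.AtPrime.under_maximalIdeal (I := q)).le
      have h4 : q ≤ p.comap (algebraMap R A) := hmin.2 ⟨Ideal.comap_isPrime _ _, h1⟩ h3
      have h5 : IsLocalRing.maximalIdeal A ≤ p := by
        rw [← Localization.AtPrime.map_eq_maximalIdeal]
        exact Ideal.map_le_iff_le_comap.2 h4
      rw [le_antisymm h2 h5]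
      exact IsLocalRing.maximalIdeal.isMaximal A
    · intro w r hr
      apply Subtype.ext
      obtain ⟨m, hm, s, hs⟩ := (hmemL W0 _).1 (hsub w.2)
      show r • w.1 = 0
      rw [← hs]
      induction hr using Submodule.span_induction with
      | mem r hr =>
        obtain ⟨r, hr, rfl⟩ := hr
        rw [algebraMap_smul, LocalizedModule.smul'_mk, Submodule.mem_annihilator.1 hr m hm,
          LocalizedModule.zero_mk]
      | zero => simp
      | add r s _ _ h1 h2 => rw [add_smul, h1, h2, add_zero]
      | smul c r _ h1 => rw [smul_eq_mul, mul_smul, h1, smul_zero]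
  have htors : IsTors b V := by
    intro v
    induction v using LocalizedModule.induction_on with
    | h f t =>
    obtain ⟨n, hn⟩ := hF f
    refine ⟨n, fun r hr => ?_⟩
    replace hr : r ∈ (a ^ n).map (algebraMap R A) := by rw [Ideal.map_pow]; exact hr
    induction hr using Submodule.span_induction with
    | mem r hr =>
      obtain ⟨r, hr, rfl⟩ := hr
      rw [algebraMap_smul, LocalizedModule.smul'_mk, hn r hr, LocalizedModule.zero_mk]
    | zero => simp
    | add r s _ _ h1 h2 => rw [add_smul, h1, h2, add_zero]
    | smul c r _ h1 => rw [smul_eq_mul, mul_smul, h1, smul_zero]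
  have : IsArtinian A V := artinian_of_tors b V htors hart0
  obtain ⟨P, hP1, hP2, hP3⟩ := sec_exists (V := V) b (FGm.of_finite _ hfin)
  refine ⟨(fun p => p.comap (algebraMap R A)) '' P, hP1.image _, ?_, ?_⟩
  · rintro _ ⟨p, hp, rfl⟩
    have := (hP2 p hp).1
    exact ⟨Ideal.comap_isPrime _ _, fun h => (hP2 p hp).2 (Ideal.map_le_iff_le_comap.2 h)⟩
  · intro x hx hxP
    obtain ⟨V', hV', h1⟩ := hP3 (algebraMap R A x) (Ideal.mem_map_of_mem _ hx)
      (fun p hp h => hxP _ ⟨p, hp, rfl⟩ h)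
    -- descend `V'`
    have : ∃ F' : Submodule R F, F'.FG ∧ V' ≤ F'.localized' A q.primeCompl ι := by
      obtain ⟨T, rfl⟩ := hV'
      have : ∀ v : V, ∃ f : F, ∃ t : q.primeCompl, LocalizedModule.mk f t = v := by
        intro v
        induction v using LocalizedModule.induction_on with
        | h f t => exact ⟨f, t, rfl⟩
      choose l t hl using this
      refine ⟨Submodule.span R (l '' (T : Set V)), Submodule.fg_span (T.finite_toSet.image _), ?_⟩
      rw [Submodule.span_le]
      intro v hv
      exact (hmemL _ _).2 ⟨l v, Submodule.subset_span ⟨v, hv, rfl⟩, t v, hl v⟩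
    obtain ⟨F', hF', hle⟩ := this
    refine ⟨F', hF', fun f => ?_⟩
    obtain ⟨v, hv⟩ := h1 (LocalizedModule.mk f 1)
    obtain ⟨m, hm, s, hms⟩ := (hmemL _ _).1 (hle hv)
    induction v using LocalizedModule.induction_on with
    | h w t =>
    rw [algebraMap_smul, LocalizedModule.smul'_mk, eq_sub_iff_add_eq, LocalizedModule.mk_add_mk,
      LocalizedModule.mk_eq] at hms
    obtain ⟨z, hz⟩ := hms
    refine ⟨z * s * t, (z * s * t).2, (z * s : R) • w, ?_⟩
    simp only [Submonoid.smul_def, Submonoid.coe_mul, one_smul, smul_add, ← mul_smul] at hz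
    have : ((z : R) * s * t) • f - x • ((z : R) * s) • w = ((z:R) * t) • m := by
      rw [sub_eq_iff_eq_add]
      simp only [← mul_smul]
      rw [mul_assoc, ← hz]
      congr 2
      ring
    rw [this]
    exact F'.smul_mem _ hm

end Loc
end Cof

namespace Cof

theorem mkQz {R : Type u} [CommRing R] {X : Type u} [AddCommGroup X] [Module R X]
    {N : Submodule R X} {x : X} : N.mkQ x = 0 ↔ x ∈ N := Submodule.Quotient.mk_eq_zero N

section D

variable (R : Type u) [CommRing R]

/-- primes of coheight less than `e` -/
def dimSet (e : ℕ) : Set (PrimeSpectrum R) := {p | Order.coheight p < (e : ℕ∞)}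

theorem dimSet_zero : dimSet R 0 = ∅ := by
  ext p; simp [dimSet]

theorem dimSet_mono {e e' : ℕ} (h : e ≤ e') : dimSet R e ⊆ dimSet R e' := by
  intro p hp
  exact lt_of_lt_of_le (show Order.coheight p < (e : ℕ∞) from hp) (by exact_mod_cast h)

variable {R}

theorem dimSet_lt {e : ℕ} {p q : PrimeSpectrum R} (h : p < q) (hp : p ∈ dimSet R (e+1)) :
    q ∈ dimSet R e := by
  have h1 : Order.coheight q + 1 ≤ Order.coheight p := Order.coheight_add_one_le h
  have h2 : Order.coheight p < ((e + 1 : ℕ) : ℕ∞) := hp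
  have h3 := lt_of_le_of_lt h1 h2
  push_cast at h3
  exact lt_of_add_lt_add_right h3

variable {X Y : Type u} [AddCommGroup X] [Module R X] [AddCommGroup Y] [Module R Y]

/-- functoriality of `0 :_X a` -/
def tbMap (a : Ideal R) (f : X →ₗ[R] Y) : tb a X →ₗ[R] tb a Y :=
  f.restrict (p := tb a X) (q := tb a Y) (fun x hx r hr => by rw [← map_smul, hx r hr, map_zero])

@[simp] theorem tbMap_coe (a : Ideal R) (f : X →ₗ[R] Y) (x : tb a X) :
    (tbMap a f x : Y) = f x := rfl

theorem tbMap_inj (a : Ideal R) (f : X →ₗ[R] Y) (hf : Function.Injective f) :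
    Function.Injective (tbMap a f) := by
  intro x y h
  exact Subtype.ext (hf (congrArg (tb a Y).subtype h))

/-- The class `𝒜_e`. -/
def AA (a : Ideal R) (e : ℕ) (X : Type u) [AddCommGroup X] [Module R X] : Prop :=
  IsTors a X ∧ FGm (dimSet R (e+1)) X ∧ FGm (dimSet R e) (tb a X)

variable [IsNoetherianRing R]

theorem AA.of_inj {a : Ideal R} {e : ℕ} (f : X →ₗ[R] Y) (hf : Function.Injective f)
    (h : AA a e Y) : AA a e X :=
  ⟨h.1.of_inj f hf, h.2.1.of_inj f hf, h.2.2.of_inj (tbMap a f) (tbMap_inj a f hf)⟩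

theorem AA.of_finite {a : Ideal R} {e : ℕ} (h : Module.Finite R X) (ht : IsTors a X) : AA a e X :=
  ⟨ht, FGm.of_finite _ h, FGm.of_inj (tb a X).subtype (Submodule.injective_subtype _)
    (FGm.of_finite _ h)⟩

theorem tb_quot (a : Ideal R) {D : Set (PrimeSpectrum R)} (X0 : Submodule R X) (h0 : X0.FG)
    (h : FGm D (tb a X)) : FGm D (tb a (X ⧸ X0)) := by
  have h1 : FGm D ((tb a (X ⧸ X0)).comap X0.mkQ) := by
    refine FGm.of_mul a _ X0 (FGm.of_finite _ ⟨(Submodule.fg_top _).2 h0⟩) h ?_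
    intro x hx r hr
    have := hx r hr
    rw [← map_smul] at this
    exact mkQz.1 this
  refine FGm.of_surj (X0.mkQ.restrict (p := (tb a (X ⧸ X0)).comap X0.mkQ) (q := tb a (X ⧸ X0))
    (fun x hx => hx)) ?_ h1
  rintro ⟨y, hy⟩
  obtain ⟨x, rfl⟩ := X0.mkQ_surjective y
  exact ⟨⟨x, hy⟩, rfl⟩

theorem good_exists {a : Ideal R} {e : ℕ} (h : AA a e X) :
    ∃ P : Set (Ideal R), P.Finite ∧ (∀ p ∈ P, p.IsPrime ∧ ¬ a ≤ p) ∧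
      ∀ x ∈ a, (∀ p ∈ P, x ∉ p) →
        FGm (dimSet R e) (X ⧸ LinearMap.range (LinearMap.lsmul R X x)) := by
  classical
  obtain ⟨ht, ⟨X0, hX0, hX1⟩, htb⟩ := h
  obtain ⟨W, hWfg, hW1⟩ := tb_quot a X0 hX0 htb
  have htF : IsTors a (X ⧸ X0) := ht.of_surj X0.mkQ X0.mkQ_surjective
  set F := X ⧸ X0 with hF
  let W0 : Submodule R F := W.map (tb a F).subtype
  have hW0 : W0.FG := hWfg.map _
  have hW0a : W0 ≤ tb a F := Submodule.map_subtype_le _ _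
  have hW2 : ∀ p : PrimeSpectrum R, p ∉ dimSet R e → ∀ f ∈ tb a F, ∃ s, s ∉ p.asIdeal ∧ s • f ∈ W0 := by
    intro p hp f hf
    obtain ⟨s, hs, h1⟩ := hW1 p hp ⟨f, hf⟩
    exact ⟨s, hs, ⟨_, h1, rfl⟩⟩
  -- the relevant primes
  have hcrit : ∀ p : PrimeSpectrum R, p ∉ dimSet R e → p.asIdeal ∉ W0.annihilator.minimalPrimes →
      ∀ f : F, ∃ s, s ∉ p.asIdeal ∧ s • f = 0 := by
    intro p hp hmin f
    by_contra hcon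
    push Not at hcon
    apply hmin
    have hex : ∃ n : ℕ, ∃ s, s ∉ p.asIdeal ∧ ∀ r ∈ a ^ n, r • s • f = 0 := by
      obtain ⟨n, hn⟩ := htF f
      exact ⟨n, 1, (Ideal.ne_top_iff_one _).1 p.2.ne_top, by simpa using hn⟩
    obtain ⟨s0, hs0, hs1⟩ := Nat.find_spec hex
    have hn0 : Nat.find hex ≠ 0 := by
      intro h0
      rw [h0] at hs1
      have := hs1 1 (by simp)
      rw [one_smul] at this
      exact hcon s0 hs0 this
    obtain ⟨n, hn⟩ := Nat.exists_eq_succ_of_ne_zero hn0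
    have hnot := Nat.find_min hex (m := n) (by omega)
    rw [hn] at hs1
    have hr : ∃ r ∈ a ^ n, ∀ s, s ∉ p.asIdeal → s • r • f ≠ 0 := by
      by_contra hc
      push Not at hc
      obtain ⟨T, hT⟩ := IsNoetherian.noetherian (a ^ n)
      obtain ⟨s, hs, h2⟩ := IsTors.of_gens p.asIdeal f T
        (fun r hr => hc r (by rw [← hT]; exact Submodule.subset_span hr))
      refine hnot ⟨s, hs, fun r hr => h2 r ?_⟩
      rw [← hT] at hr
      exact hr
    obtain ⟨r, hra, hr⟩ := hr
    have hg : s0 • r • f ∈ tb a F := by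
      intro r' hr'
      rw [smul_comm s0 r f, ← mul_smul]
      refine hs1 _ ?_
      rw [Nat.succ_eq_add_one, pow_succ']
      exact Ideal.mul_mem_mul hr' hra
    obtain ⟨s1, hs1', hg1⟩ := hW2 p hp _ hg
    have hle : W0.annihilator ≤ p.asIdeal := by
      intro z hz
      by_contra hzp
      have h5 := Submodule.mem_annihilator.1 hz _ hg1
      rw [← mul_smul, ← mul_smul] at h5
      exact hr _ (fun hh => (p.2.mem_or_mem hh).elim
        (fun h => (p.2.mem_or_mem h).elim hzp hs1') hs0) h5
    refine ⟨⟨p.2, hle⟩, ?_⟩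
    rintro p' ⟨hp', hle'⟩ hpp
    by_contra hnle
    have hlt : (⟨p', hp'⟩ : PrimeSpectrum R) < p := lt_of_le_not_ge hpp hnle
    apply hp
    refine dimSet_lt hlt ?_
    by_contra hp2
    have : Module.Finite R W0 := ⟨(Submodule.fg_top _).2 hW0⟩
    have h6 : (⟨p', hp'⟩ : PrimeSpectrum R) ∈ Module.support R W0 :=
      Module.mem_support_iff_of_finite.2 hle'
    obtain ⟨w, hw⟩ := Module.mem_support_iff'.1 h6
    obtain ⟨x, hx⟩ := X0.mkQ_surjective w.1
    obtain ⟨s, hs, hsx⟩ := hX1 _ hp2 x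
    apply hw s hs
    apply Subtype.ext
    show s • w.1 = 0
    rw [← hx, ← map_smul]
    exact mkQz.2 hsx
  have hloc : ∀ q : PrimeSpectrum R, ∃ P : Set (Ideal R), P.Finite ∧ (∀ p ∈ P, p.IsPrime ∧ ¬ a ≤ p) ∧
      ∀ x ∈ a, (∀ p ∈ P, x ∉ p) → ∃ F' : Submodule R F, F'.FG ∧
        (q ∉ dimSet R e → q.asIdeal ∈ W0.annihilator.minimalPrimes →
        ∀ f : F, ∃ s, s ∉ q.asIdeal ∧ ∃ w : F, s • f - x • w ∈ F') := by
    intro q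
    by_cases hq : q ∉ dimSet R e ∧ q.asIdeal ∈ W0.annihilator.minimalPrimes
    · obtain ⟨P, h1, h2, h3⟩ := good_local a F htF q.asIdeal W0 hW0 hW0a hq.2 (hW2 q hq.1)
      refine ⟨P, h1, h2, fun x hx hxP => ?_⟩
      obtain ⟨F', h4, h5⟩ := h3 x hx hxP
      exact ⟨F', h4, fun _ _ => h5⟩
    · exact ⟨∅, Set.finite_empty, by simp, fun x _ _ => ⟨⊥, Submodule.fg_bot,
        fun h1 h2 => absurd ⟨h1, h2⟩ hq⟩⟩
  choose P hPf hP hP3 using hloc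
  have hQ : {q : PrimeSpectrum R | q.asIdeal ∈ W0.annihilator.minimalPrimes}.Finite := by
    refine Set.Finite.preimage (f := PrimeSpectrum.asIdeal) ?_
      (Ideal.finite_minimalPrimes_of_isNoetherianRing R W0.annihilator)
    intro p _ q _ h
    exact PrimeSpectrum.ext h
  refine ⟨⋃ q ∈ {q : PrimeSpectrum R | q.asIdeal ∈ W0.annihilator.minimalPrimes}, P q,
    hQ.biUnion (fun q _ => hPf q), ?_, ?_⟩
  · intro p hp
    simp only [Set.mem_iUnion] at hp
    obtain ⟨q, _, hq⟩ := hp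
    exact hP q p hq
  intro x hx hxP
  have h7 : ∀ q : PrimeSpectrum R, ∃ F' : Submodule R F, F'.FG ∧
        (q ∉ dimSet R e → q.asIdeal ∈ W0.annihilator.minimalPrimes →
        ∀ f : F, ∃ s, s ∉ q.asIdeal ∧ ∃ w : F, s • f - x • w ∈ F') := by
    intro q
    by_cases hq : q.asIdeal ∈ W0.annihilator.minimalPrimes
    · exact hP3 q x hx (fun p hp => hxP p (by
        simp only [Set.mem_iUnion]; exact ⟨q, hq, hp⟩))
    · exact ⟨⊥, Submodule.fg_bot, fun _ h => absurd h hq⟩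
  choose F' hF' hF'2 using h7
  let G : Submodule R F := ⨆ q ∈ hQ.toFinset, F' q
  have hG : G.FG := Submodule.fg_biSup _ _ (fun q _ => hF' q)
  let g1 : (X ⧸ LinearMap.range (LinearMap.lsmul R X x)) →ₗ[R]
      (F ⧸ LinearMap.range (LinearMap.lsmul R F x)) :=
    Submodule.mapQ _ _ X0.mkQ (by
      rintro _ ⟨w, rfl⟩
      exact ⟨X0.mkQ w, (map_smul X0.mkQ x w).symm⟩)
  have hker : LinearMap.ker g1 ≤ LinearMap.range ((Submodule.mkQ
      (LinearMap.range (LinearMap.lsmul R X x))).comp X0.subtype) := by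
    intro z hz
    obtain ⟨u, rfl⟩ := Submodule.mkQ_surjective _ z
    have h8 : X0.mkQ u ∈ LinearMap.range (LinearMap.lsmul R F x) := by
      have h9 : Submodule.mkQ (LinearMap.range (LinearMap.lsmul R F x)) (X0.mkQ u) = 0 := hz
      exact mkQz.1 h9
    obtain ⟨w, hw⟩ := h8
    obtain ⟨v, rfl⟩ := X0.mkQ_surjective w
    rw [LinearMap.lsmul_apply, ← map_smul] at hw
    have h10 : u - x • v ∈ X0 := by
      rw [← Submodule.ker_mkQ X0, LinearMap.mem_ker, map_sub, hw, sub_self]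
    refine ⟨⟨_, h10⟩, ?_⟩
    simp only [LinearMap.comp_apply, Submodule.subtype_apply, map_sub]
    rw [sub_eq_self]
    have : x • v ∈ LinearMap.range (LinearMap.lsmul R X x) := ⟨v, rfl⟩
    exact mkQz.2 this
  refine FGm.of_exact _ g1 hker (FGm.of_finite _ ⟨(Submodule.fg_top _).2 hX0⟩) ?_
  refine ⟨G.map (Submodule.mkQ _), hG.map _, ?_⟩
  intro p hp z
  obtain ⟨f, rfl⟩ := Submodule.mkQ_surjective _ z
  by_cases hpm : p.asIdeal ∈ W0.annihilator.minimalPrimes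
  · obtain ⟨s, hs, w, hw⟩ := hF'2 p hp hpm f
    refine ⟨s, hs, s • f - x • w, ?_, ?_⟩
    · have hle : F' p ≤ G := le_iSup₂_of_le (f := fun q (_ : q ∈ hQ.toFinset) => F' q) p
        (by simpa using hpm) le_rfl
      exact hle hw
    · rw [map_sub, map_smul, sub_eq_self]
      have : x • w ∈ LinearMap.range (LinearMap.lsmul R F x) := ⟨w, rfl⟩
      exact mkQz.2 this
  · obtain ⟨s, hs, h0⟩ := hcrit p hp hpm f
    refine ⟨s, hs, ?_⟩
    rw [← map_smul, h0, map_zero]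
    exact Submodule.zero_mem _

/-- prime avoidance -/
theorem avoid (a b : Ideal R) (hab : ¬ a ≤ b) (P : Set (Ideal R)) (hP : P.Finite)
    (hP1 : ∀ p ∈ P, p.IsPrime ∧ ¬ a ≤ p) : ∃ x ∈ a, x ∉ b ∧ ∀ p ∈ P, x ∉ p := by
  classical
  by_contra hcon
  push Not at hcon
  have hsub : (a : Set R) ⊆ ⋃ i ∈ (↑(insert b hP.toFinset) : Set (Ideal R)), (i : Set R) := by
    intro x hx
    simp only [Set.mem_iUnion]
    by_cases hb : x ∈ b
    · exact ⟨b, by simp, hb⟩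
    · obtain ⟨p, hp, hxp⟩ := hcon x hx hb
      exact ⟨p, by simp [hp], hxp⟩
  obtain ⟨i, hi, hle⟩ := (Ideal.subset_union_prime (f := fun i : Ideal R => i) b b (by
    intro i hi h1 _
    rcases Finset.mem_insert.1 hi with h | h
    · exact absurd h h1
    · exact (hP1 i (by simpa using h)).1)).1 hsub
  rcases Finset.mem_insert.1 hi with rfl | h
  · exact hab hle
  · exact (hP1 i (by simpa using h)).2 hle

theorem quot_closure (a : Ideal R) (e : ℕ) (b : Ideal R) : b ≤ a →
    ∀ (X : Type u) [AddCommGroup X] [Module R X], (∀ r ∈ b, ∀ x : X, r • x = 0) → AA a e X →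
    ∀ Y : Submodule R X, FGm (dimSet R e) (tb a (X ⧸ Y)) := by
  induction b using WellFoundedGT.induction with
  | ind b ih =>
  intro hba X _ _ hbX hX Y
  by_cases hab : a ≤ b
  · have h1 : FGm (dimSet R e) X := by
      refine FGm.of_surj (tb a X).subtype ?_ hX.2.2
      intro x
      exact ⟨⟨x, fun r hr => hbX r (hab hr) x⟩, rfl⟩
    exact FGm.of_inj (tb a _).subtype (Submodule.injective_subtype _)
      (FGm.of_surj Y.mkQ Y.mkQ_surjective h1)
  have hY : AA a e Y := hX.of_inj Y.subtype (Submodule.injective_subtype _)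
  obtain ⟨P, hP, hP1, hP2⟩ := good_exists hY
  obtain ⟨x, hxa, hxb, hxP⟩ := avoid a b hab P hP hP1
  have hYx := hP2 x hxa hxP
  let S : Submodule R X := LinearMap.ker (LinearMap.lsmul R X x)
  have hS : AA a e S := hX.of_inj S.subtype (Submodule.injective_subtype _)
  have hU := ih (b ⊔ Ideal.span {x}) (lt_of_le_of_ne le_sup_left (fun h => hxb (by
      rw [h]; exact Submodule.mem_sup_right (Ideal.mem_span_singleton_self x))))
    (sup_le hba ((Ideal.span_singleton_le_iff_mem a).2 hxa)) S (by
      intro r hr s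
      obtain ⟨r1, hr1, r2, hr2, rfl⟩ := Submodule.mem_sup.1 hr
      obtain ⟨c, rfl⟩ := Ideal.mem_span_singleton'.1 hr2
      have hs : x • s = 0 := Subtype.ext s.2
      rw [add_smul, mul_smul, hs, smul_zero, add_zero]
      exact Subtype.ext (hbX r1 hr1 s)) hS (Y.comap S.subtype)
  let xY : Submodule R X := Y.map (LinearMap.lsmul R X x)
  let φ0 : (X ⧸ Y) →ₗ[R] (X ⧸ xY) := Submodule.mapQ Y xY (LinearMap.lsmul R X x)
    (Submodule.le_comap_map _ _)
  let φ : tb a (X ⧸ Y) →ₗ[R] Y.map xY.mkQ := (φ0.comp (tb a (X ⧸ Y)).subtype).codRestrict _ (by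
    rintro ⟨z, hz⟩
    obtain ⟨u, rfl⟩ := Y.mkQ_surjective z
    have h1 := hz x hxa
    rw [← map_smul] at h1
    exact ⟨x • u, mkQz.1 h1, rfl⟩)
  have htarget : FGm (dimSet R e) (Y.map xY.mkQ) := by
    let ψ : (Y ⧸ LinearMap.range (LinearMap.lsmul R Y x)) →ₗ[R] (X ⧸ xY) :=
      Submodule.mapQ _ _ Y.subtype (by
        rintro _ ⟨y, rfl⟩
        exact ⟨y, y.2, rfl⟩)
    have hr : LinearMap.range ψ = Y.map xY.mkQ := by
      rw [Submodule.range_mapQ, Submodule.range_subtype]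
    rw [← hr]
    exact FGm.of_surj ψ.rangeRestrict ψ.surjective_rangeRestrict hYx
  let θ : (S ⧸ Y.comap S.subtype) →ₗ[R] (X ⧸ Y) := Submodule.mapQ _ _ S.subtype le_rfl
  refine FGm.of_exact (tbMap a θ) φ ?_ hU htarget
  rintro ⟨z, hz⟩ hk
  obtain ⟨u, rfl⟩ := Y.mkQ_surjective z
  have h2 : xY.mkQ (x • u) = 0 := congrArg (Submodule.subtype _) (LinearMap.mem_ker.1 hk)
  have h3 : x • u ∈ xY := mkQz.1 h2
  obtain ⟨y, hy, hyu⟩ := h3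
  have h4 : u - y ∈ S := by
    have : x • y = x • u := hyu
    simp [S, smul_sub, this]
  have h5 : Y.mkQ (u - y) = Y.mkQ u := by
    rw [map_sub, sub_eq_self]; exact mkQz.2 hy
  refine ⟨⟨Submodule.mkQ _ ⟨u - y, h4⟩, ?_⟩, ?_⟩
  · intro r hr
    have h6 := hz r hr
    rw [← h5, ← map_smul] at h6
    rw [← map_smul]
    have h7 : r • (u - y) ∈ Y := mkQz.1 h6
    have h8 : r • (⟨u - y, h4⟩ : S) ∈ Y.comap S.subtype := h7
    exact mkQz.2 h8
  · exact Subtype.ext h5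

/-- `𝒜_e`: quotient closure, final form. -/
theorem tb_quot_AA {a : Ideal R} {e : ℕ} (f : X →ₗ[R] Y) (hf : Function.Surjective f)
    (hX : AA a e X) : FGm (dimSet R e) (tb a Y) := by
  have h := quot_closure a e ⊥ bot_le X (by simp) hX (LinearMap.ker f)
  exact FGm.of_inj (tbMap a (f.quotKerEquivOfSurjective hf).symm.toLinearMap)
    (tbMap_inj _ _ (LinearEquiv.injective _)) h

end D
end Cof

namespace Cof
open CategoryTheory Abelian

section PC
variable {R : Type u} [CommRing R]

/-- new Ext of R/a. -/
abbrev XT (a : Ideal R) (n : ℕ) (N : Type u) [AddCommGroup N] [Module R N] : Type u :=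
  Abelian.Ext.{u} (ModuleCat.of R (R ⧸ a)) (ModuleCat.of R N) n

/-- Ext finiteness -/
def EF (a : Ideal R) (n : ℕ) (N : Type u) [AddCommGroup N] [Module R N] : Prop :=
  Module.Finite R (XT a n N)

variable {A B C : Type u} [AddCommGroup A] [Module R A] [AddCommGroup B] [Module R B]
  [AddCommGroup C] [Module R C]

theorem sesX {f : A →ₗ[R] B} {g : B →ₗ[R] C} (hf : Function.Injective f)
    (hg : Function.Surjective g) (h : Function.Exact f g) :
    (ModuleCat.shortComplexOfCompEqZero f g h.linearMap_comp_eq_zero).ShortExact :=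
  ModuleCat.shortComplex_shortExact _ h hf hg

theorem fin_mid {M N P : Type u} [AddCommGroup M] [Module R M] [AddCommGroup N] [Module R N]
    [AddCommGroup P] [Module R P] [IsNoetherianRing R] (f : M →ₗ[R] N) (g : N →ₗ[R] P)
    (h : ∀ x, g x = 0 → ∃ y, f y = x) (hM : Module.Finite R M) (hP : Module.Finite R P) :
    Module.Finite R N :=
  FGm.finite (FGm.of_exact f g (fun x hx => h x hx) (FGm.of_finite _ hM) (FGm.of_finite _ hP))

/-- functoriality -/
noncomputable def xtMap (a : Ideal R) (n : ℕ) (f : A →ₗ[R] B) : XT a n A →ₗ[R] XT a n B :=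
  (Ext.mk₀ (ModuleCat.ofHom f)).postcompOfLinear R (ModuleCat.of R (R ⧸ a)) (add_zero n)

/-- connecting map -/
noncomputable def xtDel (a : Ideal R) (n : ℕ) {f : A →ₗ[R] B} {g : B →ₗ[R] C}
    (hf : Function.Injective f)
    (hg : Function.Surjective g) (h : Function.Exact f g) : XT a n C →ₗ[R] XT a (n+1) A :=
  (sesX hf hg h).extClass.postcompOfLinear R (ModuleCat.of R (R ⧸ a)) rfl

section

theorem xt_ex1 (a : Ideal R) {f : A →ₗ[R] B} {g : B →ₗ[R] C} (hf : Function.Injective f)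
    (hg : Function.Surjective g) (h : Function.Exact f g)
    (n : ℕ) (x : XT a (n+1) A) (hx : xtMap a (n+1) f x = 0) :
    ∃ y, xtDel a n hf hg h y = x :=
  Ext.covariant_sequence_exact₁ _ (sesX hf hg h) x hx rfl

theorem xt_ex2 (a : Ideal R) {f : A →ₗ[R] B} {g : B →ₗ[R] C} (hf : Function.Injective f)
    (hg : Function.Surjective g) (h : Function.Exact f g)
    (n : ℕ) (x : XT a n B) (hx : xtMap a n g x = 0) :
    ∃ y, xtMap a n f y = x :=
  Ext.covariant_sequence_exact₂ _ (sesX hf hg h) x hx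

theorem xt_ex3 (a : Ideal R) {f : A →ₗ[R] B} {g : B →ₗ[R] C} (hf : Function.Injective f)
    (hg : Function.Surjective g) (h : Function.Exact f g)
    (n : ℕ) (x : XT a n C) (hx : xtDel a n hf hg h x = 0) :
    ∃ y, xtMap a n g y = x :=
  Ext.covariant_sequence_exact₃ _ (sesX hf hg h) x rfl hx

theorem xt_del0 (a : Ideal R) {f : A →ₗ[R] B} {g : B →ₗ[R] C} (hf : Function.Injective f)
    (hg : Function.Surjective g) (h : Function.Exact f g)
    (n : ℕ) (x : XT a n B) : xtDel a n hf hg h (xtMap a n g x) = 0 := by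
  have := (sesX hf hg h).comp_extClass
  change (x.comp (Ext.mk₀ (ModuleCat.ofHom g)) (add_zero n)).comp (sesX hf hg h).extClass rfl = 0
  rw [Ext.comp_assoc (a₁₂ := n) (a₂₃ := 1) (h₁₂ := add_zero n) (h₂₃ := zero_add 1) (h := by omega)]
  erw [this]
  simp

variable [IsNoetherianRing R]

theorem EF.mid (a : Ideal R) {f : A →ₗ[R] B} {g : B →ₗ[R] C} (hf : Function.Injective f)
    (hg : Function.Surjective g) (h : Function.Exact f g)
    {n : ℕ} (hA : EF a n A) (hC : EF a n C) : EF a n B :=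
  fin_mid _ _ (xt_ex2 a hf hg h n) hA hC

theorem EF.right (a : Ideal R) {f : A →ₗ[R] B} {g : B →ₗ[R] C} (hf : Function.Injective f)
    (hg : Function.Surjective g) (h : Function.Exact f g)
    {n : ℕ} (hB : EF a n B) (hA : EF a (n+1) A) : EF a n C :=
  fin_mid _ _ (xt_ex3 a hf hg h n) hB hA

theorem EF.left (a : Ideal R) {f : A →ₗ[R] B} {g : B →ₗ[R] C} (hf : Function.Injective f)
    (hg : Function.Surjective g) (h : Function.Exact f g)
    {n : ℕ} (hC : EF a n C) (hB : EF a (n+1) B) : EF a (n+1) A :=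
  fin_mid _ _ (xt_ex1 a hf hg h n) hC hB
end

theorem EF.of_injective (a : Ideal R) [Module.Injective R A] (n : ℕ) : EF a (n+1) A := by
  have := Module.injective_object_of_injective_module R A
  have : Subsingleton (XT a (n+1) A) := Ext.subsingleton_of_injective _ _ n
  unfold EF; infer_instance

/-- Hom(R/a,N) is tb -/
noncomputable def homTb (a : Ideal R) (N : Type u) [AddCommGroup N] [Module R N] :
    ((R ⧸ a) →ₗ[R] N) ≃ₗ[R] tb a N where
  toFun φ := ⟨φ 1, by
    intro r hr
    rw [← map_smul, ← map_zero φ]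
    congr 1
    rw [← map_one (Ideal.Quotient.mk a), Algebra.smul_def, Ideal.Quotient.algebraMap_eq, ← map_mul,
      mul_one]
    exact Ideal.Quotient.eq_zero_iff_mem.2 hr⟩
  map_add' _ _ := rfl
  map_smul' _ _ := rfl
  invFun x := Submodule.liftQ a (LinearMap.toSpanSingleton R N x) (fun r hr => x.2 r hr)
  left_inv φ := by
    ext
    change (1:R) • φ 1 = φ 1
    rw [one_smul]
  right_inv x := by
    ext
    change (1:R) • (x:N) = x
    rw [one_smul]

/-- Ext0 is tb -/
noncomputable def xt0 (a : Ideal R) (N : Type u) [AddCommGroup N] [Module R N] :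
    XT a 0 N ≃ₗ[R] tb a N :=
  (Ext.linearEquiv₀.trans ModuleCat.homLinearEquiv).trans (homTb a N)

theorem xt0_nat (a : Ideal R) (f : A →ₗ[R] B) (x : XT a 0 A) :
    xt0 a B (xtMap a 0 f x) = tbMap a f (xt0 a A x) := by
  obtain ⟨φ, rfl⟩ := Ext.linearEquiv₀ (R := R).symm.surjective x
  have : xtMap a 0 f (Ext.linearEquiv₀ (R := R).symm φ) =
      Ext.linearEquiv₀ (R := R).symm (φ ≫ ModuleCat.ofHom f) := by
    simp [xtMap, Ext.mk₀_comp_mk₀]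
  rw [this]
  simp only [xt0, LinearEquiv.trans_apply, LinearEquiv.apply_symm_apply]
  rfl

theorem EF0_iff (a : Ideal R) : EF a 0 A ↔ Module.Finite R (tb a A) :=
  ⟨fun (h : Module.Finite R (XT a 0 A)) => Module.Finite.equiv (xt0 a A),
   fun h => Module.Finite.equiv (xt0 a A).symm⟩

theorem EF.of_finite [IsNoetherianRing R] (a : Ideal R) (h : Module.Finite R A) (n : ℕ) :
    EF a n A := by
  unfold EF; infer_instance

theorem EF.equiv (a : Ideal R) (n : ℕ) (e : A ≃ₗ[R] B) (h : EF a n A) : EF a n B := by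
  have := h
  unfold EF at this
  refine Module.Finite.of_surjective (xtMap a n e.toLinearMap) ?_
  intro y
  refine ⟨xtMap a n e.symm.toLinearMap y, ?_⟩
  simp only [xtMap, LinearMap.flip_apply, Ext.bilinearCompOfLinear_apply_apply]
  rw [Ext.comp_assoc_of_third_deg_zero, Ext.mk₀_comp_mk₀, ← ModuleCat.ofHom_comp]
  simp

theorem EF1_quot [IsNoetherianRing R] (a : Ideal R) {f : A →ₗ[R] B} {g : B →ₗ[R] C}
    (hf : Function.Injective f)
    (hg : Function.Surjective g) (h : Function.Exact f g) (hA : EF a 1 A) :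
    Module.Finite R (tb a C ⧸ LinearMap.range (tbMap a g)) := by
  have : Module.Finite R (XT a 1 A) := hA
  let D : tb a C →ₗ[R] XT a 1 A := xtDel a 0 hf hg h ∘ₗ (xt0 a C).symm.toLinearMap
  have hD : LinearMap.range (tbMap a g) ≤ LinearMap.ker D := by
    rintro _ ⟨x, rfl⟩
    obtain ⟨x, rfl⟩ := (xt0 a B).surjective x
    rw [← xt0_nat]
    simp [D, xt_del0]
  refine Module.Finite.of_injective (Submodule.liftQ _ D hD) ?_
  rw [← LinearMap.ker_eq_bot, Submodule.ker_liftQ_eq_bot]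
  intro x hx
  obtain ⟨y, hy⟩ := xt_ex3 a hf hg h 0 _ hx
  refine ⟨xt0 a B y, ?_⟩
  rw [← xt0_nat, hy]
  simp

theorem EF1_of_quot (a : Ideal R) {f : A →ₗ[R] B} {g : B →ₗ[R] C}
    (hf : Function.Injective f) [Module.Injective R B]
    (hg : Function.Surjective g) (h : Function.Exact f g)
    (hq : Module.Finite R (tb a C ⧸ LinearMap.range (tbMap a g))) : EF a 1 A := by
  have := Module.injective_object_of_injective_module R B
  have : Subsingleton (XT a 1 B) := Ext.subsingleton_of_injective _ _ 0
  let D : tb a C →ₗ[R] XT a 1 A := xtDel a 0 hf hg h ∘ₗ (xt0 a C).symm.toLinearMap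
  have hD : LinearMap.range (tbMap a g) ≤ LinearMap.ker D := by
    rintro _ ⟨x, rfl⟩
    obtain ⟨x, rfl⟩ := (xt0 a B).surjective x
    rw [← xt0_nat]
    simp [D, xt_del0]
  refine Module.Finite.of_surjective (Submodule.liftQ _ D hD) ?_
  intro y
  obtain ⟨z, hz⟩ := xt_ex1 a hf hg h 0 y (Subsingleton.elim _ _)
  refine ⟨Submodule.Quotient.mk (xt0 a C z), ?_⟩
  change D _ = y
  simp [D, hz]

end PC
end Cof

namespace Cof

section SQ
variable {R : Type u} [CommRing R] {X Y : Type u} [AddCommGroup X] [Module R X]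
  [AddCommGroup Y] [Module R Y]

/-- subquotient -/
abbrev SQ (Z B : Submodule R X) : Type u := Z ⧸ B.submoduleOf Z

/-- class of an element -/
def sqk {Z B : Submodule R X} (z : X) (hz : z ∈ Z) : SQ Z B := (B.submoduleOf Z).mkQ ⟨z, hz⟩

theorem sqk_zero {Z B : Submodule R X} {z : X} {hz : z ∈ Z} : (sqk z hz : SQ Z B) = 0 ↔ z ∈ B :=
  mkQz

theorem sqk_eq {Z B : Submodule R X} {z w : X} {hz : z ∈ Z} {hw : w ∈ Z} :
    (sqk z hz : SQ Z B) = sqk w hw ↔ z - w ∈ B := by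
  rw [← sub_eq_zero, sqk, sqk, ← map_sub, mkQz]; rfl

theorem sqk_smul {Z B : Submodule R X} {z : X} (r : R) {hz : z ∈ Z} :
    r • (sqk z hz : SQ Z B) = sqk (r • z) (Z.smul_mem r hz) := rfl

theorem sq_surj {Z B : Submodule R X} (q : SQ Z B) : ∃ z hz, sqk z hz = q := by
  obtain ⟨⟨z, hz⟩, rfl⟩ := Submodule.mkQ_surjective _ q
  exact ⟨z, hz, rfl⟩

/-- induced map -/
def sqMap {Z B : Submodule R X} {Z' B' : Submodule R Y} (f : X →ₗ[R] Y) (hZ : ∀ z ∈ Z, f z ∈ Z')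
    (hB : ∀ z ∈ Z, z ∈ B → f z ∈ B') : SQ Z B →ₗ[R] SQ Z' B' :=
  Submodule.mapQ _ _ (f.restrict hZ) (fun z hz => hB z z.2 hz)

theorem sqMap_k {Z B : Submodule R X} {Z' B' : Submodule R Y} (f : X →ₗ[R] Y)
    (hZ : ∀ z ∈ Z, f z ∈ Z') (hB : ∀ z ∈ Z, z ∈ B → f z ∈ B') (z : X) (hz : z ∈ Z) :
    sqMap f hZ hB (sqk z hz : SQ Z B) = sqk (f z) (hZ z hz) := rfl

end SQ

/-- complexes of modules, with the degree shifted by one. -/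
structure Cx (R : Type u) [CommRing R] where
  X : ℕ → Type u
  [ag : ∀ n, AddCommGroup (X n)]
  [md : ∀ n, Module R (X n)]
  d : ∀ n, X n →ₗ[R] X (n+1)
  dd : ∀ n x, d (n+1) (d n x) = 0
  sub : Subsingleton (X 0)

attribute [instance] Cx.ag Cx.md

section K
variable {R : Type u} [CommRing R]

/-- cycles -/
abbrev Cx.Z (C : Cx R) (n : ℕ) : Submodule R (C.X (n+1)) := LinearMap.ker (C.d (n+1))
/-- boundaries -/
abbrev Cx.B (C : Cx R) (n : ℕ) : Submodule R (C.X (n+1)) := LinearMap.range (C.d n)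
/-- cohomology -/
abbrev Cx.H (C : Cx R) (n : ℕ) : Type u := SQ (C.Z n) (C.B n)

/-- terms of the Koszul construction -/
def kX (C : Cx R) : ℕ → Type u
  | 0 => PUnit
  | n+1 => C.X (n+1) × C.X n

instance kag (C : Cx R) : ∀ n, AddCommGroup (kX C n)
  | 0 => inferInstanceAs (AddCommGroup PUnit)
  | n+1 => inferInstanceAs (AddCommGroup (C.X (n+1) × C.X n))

instance kmd (C : Cx R) : ∀ n, Module R (kX C n)
  | 0 => (inferInstance : Module R PUnit.{u+1})
  | n+1 => inferInstanceAs (Module R (C.X (n+1) × C.X n))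

/-- differential -/
def kd (x : R) (C : Cx R) : ∀ n, kX C n →ₗ[R] kX C (n+1)
  | 0 => 0
  | n+1 => (LinearMap.prod (C.d (n+1) ∘ₗ LinearMap.fst R _ _)
      (x • LinearMap.fst R _ _ - C.d n ∘ₗ LinearMap.snd R _ _) :
        C.X (n+1) × C.X n →ₗ[R] C.X (n+2) × C.X (n+1))

/-- pairs -/
def kX.mk {C : Cx R} {n : ℕ} (u : C.X (n+1)) (v : C.X n) : kX C (n+1) := (u, v)

theorem kd_apply (x : R) (C : Cx R) (n : ℕ) (u : C.X (n+1)) (v : C.X n) :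
    kd x C (n+1) (kX.mk u v) = kX.mk (C.d (n+1) u) (x • u - C.d n v) := rfl

theorem kX.ex {C : Cx R} {n : ℕ} (w : kX C (n+1)) : ∃ u v, w = kX.mk u v := ⟨w.1, w.2, rfl⟩

theorem kX.zero {C : Cx R} {n : ℕ} : kX.mk (0 : C.X (n+1)) 0 = 0 := rfl

/-- Koszul construction -/
def Kz (x : R) (C : Cx R) : Cx R where
  X := kX C
  d := kd x C
  dd := by
    intro n w
    cases n with
    | zero => change kd x C 1 0 = 0; rw [map_zero]
    | succ n =>
      obtain ⟨u, v, rfl⟩ := kX.ex w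
      rw [kd_apply, kd_apply]
      simp only [C.dd, map_sub, map_smul, sub_zero, sub_self]
      rfl
  sub := inferInstanceAs (Subsingleton PUnit)

/-- pairs -/
def kmk (x : R) {C : Cx R} {n : ℕ} (u : C.X (n+1)) (v : C.X n) : (Kz x C).X (n+1) :=
  kX.mk u v

theorem kcase {x : R} {C : Cx R} {n : ℕ} (w : (Kz x C).X (n+1)) : ∃ u v, w = kmk x u v :=
  kX.ex w

theorem kmk_inj {x : R} {C : Cx R} {n : ℕ} {u u' : C.X (n+1)} {v v' : C.X n} :
    kmk x u v = kmk x u' v' ↔ u = u' ∧ v = v' := Prod.mk_inj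

theorem kmk_zero (x : R) (C : Cx R) (n : ℕ) :
    (0 : (Kz x C).X (n+1)) = kmk x 0 0 := rfl

theorem kmk_smul (x r : R) (C : Cx R) (n : ℕ) (u : C.X (n+1)) (v : C.X n) :
    r • kmk x u v = kmk x (r • u) (r • v) := rfl

theorem kmk_sub (x : R) (C : Cx R) (n : ℕ) (u u' : C.X (n+1)) (v v' : C.X n) :
    kmk x u v - kmk x u' v' = kmk x (u - u') (v - v') := rfl

/-- first component -/
def kfst (x : R) (C : Cx R) (n : ℕ) : (Kz x C).X (n+1) →ₗ[R] C.X (n+1) :=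
  LinearMap.fst R (C.X (n+1)) (C.X n)

theorem kfst_mk (x : R) (C : Cx R) (n : ℕ) (u : C.X (n+1)) (v : C.X n) :
    kfst x C n (kmk x u v) = u := rfl

/-- second inclusion -/
def kinr (x : R) (C : Cx R) (n : ℕ) : C.X n →ₗ[R] (Kz x C).X (n+1) :=
  LinearMap.inr R (C.X (n+1)) (C.X n)

theorem kinr_mk (x : R) (C : Cx R) (n : ℕ) (v : C.X n) :
    kinr x C n v = kmk x 0 v := rfl

/-- first inclusion -/
def kinl (x : R) (C : Cx R) (n : ℕ) : C.X (n+1) →ₗ[R] (Kz x C).X (n+1) :=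
  LinearMap.inl R (C.X (n+1)) (C.X n)

theorem kinl_mk (x : R) (C : Cx R) (n : ℕ) (u : C.X (n+1)) :
    kinl x C n u = kmk x u 0 := rfl

theorem Kz_d (x : R) (C : Cx R) (n : ℕ) (u : C.X (n+1)) (v : C.X n) :
    (Kz x C).d (n+1) (kmk x u v) = kmk x (C.d (n+1) u) (x • u - C.d n v) := rfl

theorem Kz_mem_Z {x : R} {C : Cx R} {n : ℕ} {u : C.X (n+1)} {v : C.X n} :
    kmk x u v ∈ (Kz x C).Z n ↔ C.d (n+1) u = 0 ∧ x • u = C.d n v := by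
  rw [LinearMap.mem_ker, Kz_d, ← sub_eq_zero (a := x • u), kmk_zero, kmk_inj]

theorem Kz_mem_B {x : R} {C : Cx R} {n : ℕ} {u : C.X (n+2)} {v : C.X (n+1)} :
    kmk x u v ∈ (Kz x C).B (n+1) ↔
      ∃ w t, C.d (n+1) w = u ∧ x • w - C.d n t = v := by
  constructor
  · rintro ⟨w, h⟩
    obtain ⟨w, t, rfl⟩ := kcase w
    rw [Kz_d, kmk_inj] at h
    exact ⟨w, t, h⟩
  · rintro ⟨w, t, h1, h2⟩
    exact ⟨kmk x w t, by rw [Kz_d, h1, h2]⟩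

theorem Kz_mem_B0 {x : R} {C : Cx R} {w : (Kz x C).X (0+1)} : w ∈ (Kz x C).B 0 ↔ w = 0 := by
  constructor
  · rintro ⟨y, rfl⟩
    have := (Kz x C).sub
    rw [Subsingleton.elim y 0, map_zero]
  · rintro rfl; exact zero_mem _

/-- projection -/
def kpi (x : R) (C : Cx R) (n : ℕ) : (Kz x C).H n →ₗ[R] C.H n :=
  sqMap (kfst x C n)
    (by
      intro w hz
      obtain ⟨u, v, rfl⟩ := kcase w
      exact (Kz_mem_Z.1 hz).1)
    (by
      intro w _ hz
      obtain ⟨u, v, rfl⟩ := kcase w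
      cases n with
      | zero =>
        rw [Kz_mem_B0] at hz
        rw [hz, map_zero]; exact zero_mem _
      | succ n =>
        obtain ⟨w, t, h1, h2⟩ := Kz_mem_B.1 hz
        exact ⟨w, h1⟩)

/-- inclusion -/
def kio (x : R) (C : Cx R) (n : ℕ) : C.H n →ₗ[R] (Kz x C).H (n+1) :=
  sqMap (kinr x C (n+1))
    (by
      intro v hv
      rw [kinr_mk]
      refine Kz_mem_Z.2 ⟨map_zero _, ?_⟩
      rw [smul_zero]; exact hv.symm)
    (by
      rintro _ _ ⟨t, rfl⟩
      rw [kinr_mk]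
      refine Kz_mem_B.2 ⟨0, -t, map_zero _, ?_⟩
      rw [smul_zero, map_neg, zero_sub, neg_neg])

theorem kpi_inj0 (x : R) (C : Cx R) : Function.Injective (kpi x C 0) := by
  rw [← LinearMap.ker_eq_bot, LinearMap.ker_eq_bot']
  intro q hq
  obtain ⟨w, hz, rfl⟩ := sq_surj q
  obtain ⟨u, v, rfl⟩ := kcase w
  have h1 : u ∈ C.B 0 := sqk_zero.1 hq
  obtain ⟨t, rfl⟩ := h1
  have := C.sub
  refine sqk_zero.2 (Kz_mem_B0.2 ?_)
  rw [Subsingleton.elim t 0, Subsingleton.elim v 0, map_zero]; rfl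

theorem kpi_ex (x : R) (C : Cx R) (n : ℕ) (q : (Kz x C).H (n+1)) (hq : kpi x C (n+1) q = 0) :
    ∃ y, kio x C n y = q := by
  obtain ⟨w, hz, rfl⟩ := sq_surj q
  obtain ⟨u, v, rfl⟩ := kcase w
  obtain ⟨w, hw⟩ : u ∈ C.B (n+1) := sqk_zero.1 hq
  change C.d (n+1) w = u at hw
  subst hw
  obtain ⟨h1, h2⟩ := Kz_mem_Z.1 hz
  have h3 : v - x • w ∈ C.Z n := by
    rw [LinearMap.mem_ker, map_sub, map_smul, h2, sub_self]
  refine ⟨sqk _ h3, ?_⟩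
  rw [kio, sqMap_k, sqk_eq, kinr_mk, kmk_sub]
  refine Kz_mem_B.2 ⟨-w, 0, by rw [map_neg, zero_sub], ?_⟩
  rw [map_zero, sub_zero, smul_neg]; abel

theorem kio_x (x : R) (C : Cx R) (n : ℕ) (q : C.H n) : kio x C n (x • q) = 0 := by
  obtain ⟨w, hw, rfl⟩ := sq_surj q
  rw [sqk_smul, kio, sqMap_k, sqk_zero, kinr_mk]
  refine Kz_mem_B.2 ⟨w, 0, hw, ?_⟩
  rw [map_zero, sub_zero]

theorem kpi_x (x : R) (C : Cx R) (n : ℕ) (q : (Kz x C).H n) : x • kpi x C n q = 0 := by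
  obtain ⟨w, hz, rfl⟩ := sq_surj q
  obtain ⟨u, v, rfl⟩ := kcase w
  rw [kpi, sqMap_k, sqk_smul, sqk_zero]
  exact ⟨v, (Kz_mem_Z.1 hz).2.symm⟩

theorem kpi_surj (x : R) (C : Cx R) (n : ℕ) (q : C.H n) (hq : x • q = 0) :
    ∃ y, kpi x C n y = q := by
  obtain ⟨u, hu, rfl⟩ := sq_surj q
  rw [sqk_smul, sqk_zero] at hq
  obtain ⟨v, hv⟩ := hq
  exact ⟨sqk (kmk x u v) (Kz_mem_Z.2 ⟨hu, hv.symm⟩), rfl⟩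

theorem K_kill (x : R) (C : Cx R) (n : ℕ) (q : (Kz x C).H n) : x • q = 0 := by
  cases n with
  | zero => exact kpi_inj0 x C (by rw [map_smul, kpi_x, map_zero])
  | succ n =>
    obtain ⟨w, hz, rfl⟩ := sq_surj q
    obtain ⟨u, v, rfl⟩ := kcase w
    rw [sqk_smul, sqk_zero, kmk_smul]
    obtain ⟨h1, h2⟩ := Kz_mem_Z.1 hz
    refine Kz_mem_B.2 ⟨v, 0, h2.symm, ?_⟩
    rw [map_zero, sub_zero]

theorem K_kill_sq (x y : R) (C : Cx R) (h : ∀ n (q : C.H n), y • q = 0) (n : ℕ)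
    (q : (Kz x C).H n) : (y ^ 2) • q = 0 := by
  cases n with
  | zero => exact kpi_inj0 x C (by rw [map_smul, pow_two, mul_smul, h, map_zero])
  | succ n =>
    obtain ⟨p, hp⟩ := kpi_ex x C n (y • q) (by rw [map_smul, h])
    rw [pow_two, mul_smul, ← hp, ← map_smul, h, map_zero]

variable [IsNoetherianRing R]

theorem IsTors.of_exact {X Y Z : Type u} [AddCommGroup X] [Module R X] [AddCommGroup Y] [Module R Y]
    [AddCommGroup Z] [Module R Z] {a : Ideal R} (f : X →ₗ[R] Y) (g : Y →ₗ[R] Z)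
    (h : ∀ y, g y = 0 → ∃ x, f x = y) (hX : IsTors a X) (hZ : IsTors a Z) : IsTors a Y := by
  intro q
  obtain ⟨m, hm⟩ := hZ (g q)
  obtain ⟨S, hS⟩ := IsNoetherian.noetherian (a ^ m)
  have h1 : ∀ s ∈ S, ∃ k : ℕ, ∀ r ∈ a ^ k, r • s • q = 0 := by
    intro s hs
    obtain ⟨y, hy⟩ := h (s • q) (by rw [map_smul, hm s (hS ▸ Submodule.subset_span hs)])
    obtain ⟨k, hk⟩ := hX y
    refine ⟨k, fun r hr => ?_⟩
    rw [← hy, ← map_smul, hk r hr, map_zero]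
  choose! k hk using h1
  refine ⟨S.sup k + m, ?_⟩
  have h2 : a ^ m ≤ Submodule.comap (LinearMap.toSpanSingleton R Y q) (tb (a ^ (S.sup k)) Y) := by
    rw [← hS, Submodule.span_le]
    intro s hs r hr
    exact hk s hs r (Ideal.pow_le_pow_right (Finset.le_sup hs) hr)
  intro r hr
  rw [pow_add] at hr
  refine Submodule.mul_induction_on hr ?_ ?_
  · intro u hu v hv
    rw [mul_smul]
    exact h2 hv u hu
  · intro u v hu hv
    rw [add_smul, hu, hv, add_zero]

theorem K_tors (a : Ideal R) (x : R) (C : Cx R) (h : ∀ n, IsTors a (C.H n)) (n : ℕ) :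
    IsTors a ((Kz x C).H n) := by
  cases n with
  | zero => exact (h 0).of_inj _ (kpi_inj0 x C)
  | succ n => exact IsTors.of_exact _ _ (kpi_ex x C n) (h n) (h (n+1))

theorem K_FGm0 {D : Set (PrimeSpectrum R)} (x : R) (C : Cx R) (h : FGm D (C.H 0)) :
    FGm D ((Kz x C).H 0) := h.of_inj _ (kpi_inj0 x C)

theorem K_FGm {D : Set (PrimeSpectrum R)} (x : R) (C : Cx R) (n : ℕ) (h : FGm D (C.H (n+1)))
    (h' : FGm D (C.H n ⧸ LinearMap.range (LinearMap.lsmul R (C.H n) x))) :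
    FGm D ((Kz x C).H (n+1)) := by
  refine FGm.of_exact (Submodule.liftQ _ (kio x C n) ?_) (kpi x C (n+1)) ?_ h' h
  · rintro _ ⟨q, rfl⟩
    exact kio_x x C n q
  · intro q hq
    obtain ⟨y, rfl⟩ := kpi_ex x C n q hq
    exact ⟨Submodule.Quotient.mk y, rfl⟩

theorem K_descend {a : Ideal R} {e : ℕ} (x : R) (hx : x ∈ a) (C : Cx R) (n : ℕ)
    (h : AA a e ((Kz x C).H n)) : FGm (dimSet R e) (tb a (C.H n)) := by
  have h1 := tb_quot_AA (kpi x C n).rangeRestrict (kpi x C n).surjective_rangeRestrict h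
  let f : tb a (C.H n) →ₗ[R] tb a (LinearMap.range (kpi x C n)) :=
    LinearMap.codRestrict _ (LinearMap.codRestrict _ (tb a (C.H n)).subtype
      (fun q => kpi_surj x C n _ (q.2 x hx)))
      (fun q r hr => Subtype.ext (q.2 r hr))
  refine h1.of_inj f ?_
  intro p q hpq
  have h2 := congrArg Subtype.val (congrArg Subtype.val hpq)
  exact Subtype.ext h2

end K
end Cof

namespace Cof
section
variable {R : Type u} [CommRing R]

/-- `0 :_C a` -/
def Cx.T (a : Ideal R) (C : Cx R) : Cx R where
  X n := tb a (C.X n)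
  d n := tbMap a (C.d n)
  dd n x := Subtype.ext (C.dd n x)
  sub := by have := C.sub; infer_instance

/-- constructor -/
def Cx.tk (a : Ideal R) (C : Cx R) (n : ℕ) (u : C.X n) (hu : u ∈ tb a (C.X n)) : (C.T a).X n :=
  ⟨u, hu⟩

/-- projection -/
def Cx.tv (a : Ideal R) (C : Cx R) (n : ℕ) : (C.T a).X n →ₗ[R] C.X n :=
  (tb a (C.X n)).subtype

theorem Cx.tv_tk (a : Ideal R) (C : Cx R) (n : ℕ) (u : C.X n) (hu : u ∈ tb a (C.X n)) :
    C.tv a n (C.tk a n u hu) = u := rfl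

theorem Cx.tv_mem (a : Ideal R) (C : Cx R) (n : ℕ) (w : (C.T a).X n) :
    C.tv a n w ∈ tb a (C.X n) := w.2

theorem Cx.tv_d (a : Ideal R) (C : Cx R) (n : ℕ) (w : (C.T a).X n) :
    C.tv a (n+1) ((C.T a).d n w) = C.d n (C.tv a n w) := rfl

theorem Cx.tv_inj (a : Ideal R) (C : Cx R) (n : ℕ) : Function.Injective (C.tv a n) :=
  Submodule.injective_subtype _

theorem Cx.T_mem_Z {a : Ideal R} {C : Cx R} {n : ℕ} {w : (C.T a).X (n+1)} :
    w ∈ (C.T a).Z n ↔ C.d (n+1) (C.tv a (n+1) w) = 0 := by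
  rw [LinearMap.mem_ker, ← (C.tv_inj a (n+2)).eq_iff, C.tv_d, map_zero]

theorem Cx.T_mem_B {a : Ideal R} {C : Cx R} {n : ℕ} {w : (C.T a).X (n+1)} :
    w ∈ (C.T a).B n ↔ ∃ t ∈ tb a (C.X n), C.d n t = C.tv a (n+1) w := by
  constructor
  · rintro ⟨t, rfl⟩
    exact ⟨C.tv a n t, C.tv_mem a n t, rfl⟩
  · rintro ⟨t, ht, h⟩
    exact ⟨C.tk a n t ht, C.tv_inj a (n+1) h⟩

theorem Cx.mem_B0 {C : Cx R} {w : C.X (0+1)} : w ∈ C.B 0 ↔ w = 0 := by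
  constructor
  · rintro ⟨y, rfl⟩
    have := C.sub
    rw [Subsingleton.elim y 0, map_zero]
  · rintro rfl; exact zero_mem _

/-- map induced on tb -/
def tfst (a : Ideal R) (x : R) (C : Cx R) (n : ℕ) :
    ((Kz x C).T a).X (n+1) →ₗ[R] (C.T a).X (n+1) := tbMap a (kfst x C n)
/-- map induced on tb -/
def tinr (a : Ideal R) (x : R) (C : Cx R) (n : ℕ) :
    (C.T a).X n →ₗ[R] ((Kz x C).T a).X (n+1) := tbMap a (kinr x C n)
/-- map induced on tb -/
def tinl (a : Ideal R) (x : R) (C : Cx R) (n : ℕ) :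
    (C.T a).X (n+1) →ₗ[R] ((Kz x C).T a).X (n+1) := tbMap a (kinl x C n)

theorem tv_tfst (a : Ideal R) (x : R) (C : Cx R) (n : ℕ) (w) :
    C.tv a (n+1) (tfst a x C n w) = kfst x C n ((Kz x C).tv a (n+1) w) := rfl
theorem tv_tinr (a : Ideal R) (x : R) (C : Cx R) (n : ℕ) (w) :
    (Kz x C).tv a (n+1) (tinr a x C n w) = kmk x 0 (C.tv a n w) := rfl
theorem tv_tinl (a : Ideal R) (x : R) (C : Cx R) (n : ℕ) (w) :
    (Kz x C).tv a (n+1) (tinl a x C n w) = kmk x (C.tv a (n+1) w) 0 := rfl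

theorem kmk_tb {a : Ideal R} {x : R} {C : Cx R} {n : ℕ} {u : C.X (n+1)} {v : C.X n} :
    kmk x u v ∈ tb a ((Kz x C).X (n+1)) ↔ u ∈ tb a _ ∧ v ∈ tb a _ := by
  simp only [mem_tb, kmk_smul, kmk_zero, kmk_inj]
  exact ⟨fun h => ⟨fun r hr => (h r hr).1, fun r hr => (h r hr).2⟩,
    fun h r hr => ⟨h.1 r hr, h.2 r hr⟩⟩

theorem tcase {a : Ideal R} {x : R} {C : Cx R} {n : ℕ} (w : ((Kz x C).T a).X (n+1)) :
    ∃ u v, u ∈ tb a (C.X (n+1)) ∧ v ∈ tb a (C.X n) ∧ (Kz x C).tv a (n+1) w = kmk x u v := by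
  obtain ⟨u, v, h⟩ := kcase ((Kz x C).tv a (n+1) w)
  have h1 := (Kz x C).tv_mem a (n+1) w
  rw [h, kmk_tb] at h1
  exact ⟨u, v, h1.1, h1.2, h⟩

/-- projection -/
def tpi (a : Ideal R) (x : R) (C : Cx R) (n : ℕ) : ((Kz x C).T a).H n →ₗ[R] (C.T a).H n :=
  sqMap (tfst a x C n)
    (by
      intro w hz
      rw [Cx.T_mem_Z] at hz ⊢
      obtain ⟨u, v, hu, hv, h⟩ := tcase w
      rw [tv_tfst, h, kfst_mk]
      rw [h] at hz
      exact (Kz_mem_Z.1 hz).1)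
    (by
      intro w _ hz
      cases n with
      | zero =>
        rw [Cx.mem_B0] at hz ⊢
        rw [hz, map_zero]
      | succ n =>
        rw [Cx.T_mem_B] at hz ⊢
        obtain ⟨t, ht, h⟩ := hz
        obtain ⟨u, v, rfl⟩ := kcase t
        rw [kmk_tb] at ht
        refine ⟨u, ht.1, ?_⟩
        rw [tv_tfst, ← h, Kz_d, kfst_mk])

theorem tpi_surj (a : Ideal R) (x : R) (hx : x ∈ a) (C : Cx R) (n : ℕ) :
    Function.Surjective (tpi a x C n) := by
  intro q
  obtain ⟨w, hw, rfl⟩ := sq_surj q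
  refine ⟨sqk (tinl a x C n w) ?_, rfl⟩
  rw [Cx.T_mem_Z, tv_tinl] at *
  refine Kz_mem_Z.2 ⟨hw, ?_⟩
  rw [map_zero]
  exact C.tv_mem a _ w x hx

theorem tpi_inj0 (a : Ideal R) (x : R) (C : Cx R) : Function.Injective (tpi a x C 0) := by
  rw [← LinearMap.ker_eq_bot, LinearMap.ker_eq_bot']
  intro q hq
  obtain ⟨w, hz, rfl⟩ := sq_surj q
  rw [tpi, sqMap_k, sqk_zero, Cx.mem_B0] at hq
  have h1 : kfst x C 0 ((Kz x C).tv a 1 w) = 0 := by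
    rw [← tv_tfst]; erw [hq]; rw [map_zero]
  obtain ⟨u, v, hu, hv, h⟩ := tcase w
  rw [sqk_zero, Cx.mem_B0]
  apply (Kz x C).tv_inj a 1
  have := C.sub
  erw [h] at h1 ⊢
  rw [kfst_mk] at h1
  rw [h1, Subsingleton.elim v 0]; rfl

/-- inclusion -/
def tio (a : Ideal R) (x : R) (C : Cx R) (n : ℕ) : (C.T a).H n →ₗ[R] ((Kz x C).T a).H (n+1) :=
  sqMap (tinr a x C (n+1))
    (by
      intro v hv
      rw [Cx.T_mem_Z] at hv ⊢
      rw [tv_tinr]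
      refine Kz_mem_Z.2 ⟨map_zero _, ?_⟩
      rw [smul_zero]; exact hv.symm)
    (by
      intro w _ hz
      rw [Cx.T_mem_B] at hz ⊢
      obtain ⟨t, ht, h⟩ := hz
      refine ⟨kmk x 0 (-t), kmk_tb.2 ⟨zero_mem _, neg_mem ht⟩, ?_⟩
      rw [Kz_d, tv_tinr, map_zero, ← h, smul_zero, map_neg, zero_sub, neg_neg])

theorem tpi_ex (a : Ideal R) (x : R) (hx : x ∈ a) (C : Cx R) (n : ℕ) (q : ((Kz x C).T a).H (n+1))
    (hq : tpi a x C (n+1) q = 0) : ∃ y, tio a x C n y = q := by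
  obtain ⟨w, hz, rfl⟩ := sq_surj q
  obtain ⟨u, v, hu, hv, h⟩ := tcase w
  rw [tpi, sqMap_k, sqk_zero, Cx.T_mem_B, tv_tfst, h, kfst_mk] at hq
  obtain ⟨t, ht, rfl⟩ := hq
  have h2 := Cx.T_mem_Z.1 hz
  rw [h] at h2
  obtain ⟨h1, h2⟩ := Kz_mem_Z.1 h2
  have h3 : C.tk a (n+1) v hv ∈ (C.T a).Z n := by
    rw [Cx.T_mem_Z, Cx.tv_tk, ← h2, hu x hx]
  refine ⟨sqk _ h3, ?_⟩
  rw [tio, sqMap_k, sqk_eq, Cx.T_mem_B]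
  refine ⟨kmk x (-t) 0, kmk_tb.2 ⟨neg_mem ht, zero_mem _⟩, ?_⟩
  rw [map_sub, tv_tinr, h, Cx.tv_tk, kmk_sub, Kz_d, map_neg, zero_sub, map_zero, sub_zero, sub_self,
    smul_neg, ht x hx, neg_zero]

/-- injective terms -/
def Cx.Inj (C : Cx R) : Prop := ∀ n, Module.Injective R (C.X n)

theorem Kz_inj (x : R) (C : Cx R) (h : C.Inj) : (Kz x C).Inj := by
  intro n
  cases n with
  | zero =>
    have := (Kz x C).sub
    exact ⟨fun _ _ _ _ _ _ _ _ _ => ⟨0, fun _ => Subsingleton.elim _ _⟩⟩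
  | succ n =>
    refine ⟨fun A B _ _ _ _ f hf g => ?_⟩
    obtain ⟨g1, h1⟩ := (h (n+1)).out f hf (kfst x C n ∘ₗ g)
    obtain ⟨g2, h2⟩ := (h n).out f hf
      ((show (Kz x C).X (n+1) →ₗ[R] C.X n from LinearMap.snd R (C.X (n+1)) (C.X n)) ∘ₗ g)
    exact ⟨(LinearMap.prod g1 g2 : B →ₗ[R] C.X (n+1) × C.X n), fun y => Prod.ext (h1 y) (h2 y)⟩

variable [IsNoetherianRing R]

theorem T_K_fin (a : Ideal R) (x : R) (hx : x ∈ a) (C : Cx R) (n : ℕ)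
    (h : ∀ i ≤ n, Module.Finite R ((C.T a).H i)) : Module.Finite R (((Kz x C).T a).H n) := by
  have h1 := h n le_rfl
  cases n with
  | zero => exact Module.Finite.of_injective _ (tpi_inj0 a x C)
  | succ n => exact fin_mid _ _ (tpi_ex a x hx C n) (h n (by omega)) h1

theorem T_of_K_fin (a : Ideal R) (x : R) (hx : x ∈ a) (C : Cx R) (n : ℕ)
    (h : Module.Finite R (((Kz x C).T a).H n)) : Module.Finite R ((C.T a).H n) :=
  Module.Finite.of_surjective _ (tpi_surj a x hx C n)
end
end Cof

namespace Cof
section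
variable {R : Type u} [CommRing R]

theorem Cx.BZ (C : Cx R) (n : ℕ) : C.B n ≤ C.Z n := by
  rintro _ ⟨y, rfl⟩
  exact C.dd n y

theorem Cx.exB (C : Cx R) (n : ℕ) :
    Function.Exact (Submodule.inclusion (C.BZ n)) ((C.B n).submoduleOf (C.Z n)).mkQ := by
  intro z
  rw [mkQz]
  constructor
  · intro h
    exact ⟨⟨z, h⟩, rfl⟩
  · rintro ⟨y, rfl⟩
    exact y.2

theorem Cx.exZ (C : Cx R) (n : ℕ) :
    Function.Exact (C.Z n).subtype (C.d (n+1)).rangeRestrict := by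
  intro z
  constructor
  · intro h
    exact ⟨⟨z, congrArg Subtype.val h⟩, rfl⟩
  · rintro ⟨y, rfl⟩
    exact Subtype.ext y.2

/-- comparison map -/
def Cx.th (a : Ideal R) (C : Cx R) (n : ℕ) : (C.T a).H n →ₗ[R] C.H n :=
  sqMap (C.tv a (n+1)) (fun _ hz => LinearMap.mem_ker.2 (Cx.T_mem_Z.1 hz)) (by
    intro z _ hz
    obtain ⟨t, _, h⟩ := Cx.T_mem_B.1 hz
    exact ⟨t, h⟩)

theorem Cx.th_mem (a : Ideal R) (C : Cx R) (n : ℕ) (q) : C.th a n q ∈ tb a (C.H n) := by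
  intro r hr
  obtain ⟨w, hw, rfl⟩ := sq_surj q
  rw [Cx.th, sqMap_k, sqk_smul, sqk_zero]
  rw [C.tv_mem a _ w r hr]; exact zero_mem _

variable [IsNoetherianRing R]

theorem Cx.EFB (a : Ideal R) (C : Cx R) (hC : C.Inj) (n : ℕ) :
    (∀ i < n, Module.Finite R (C.H i)) → ∀ p, EF a (p+1) (C.B n) := by
  induction n with
  | zero =>
    intro _ p
    have : Subsingleton (C.B 0) := ⟨fun x y => Subtype.ext (by
      rw [Cx.mem_B0.1 x.2, Cx.mem_B0.1 y.2])⟩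
    exact EF.of_finite a inferInstance _
  | succ n ih =>
    intro h p
    have h1 := ih (fun i hi => h i (by omega))
    have h2 : ∀ p, EF a (p+1) (C.Z n) := fun p =>
      EF.mid a (Submodule.inclusion_injective _) (Submodule.mkQ_surjective _) (C.exB n) (h1 p)
        (EF.of_finite a (h n (by omega)) _)
    have := hC (n+1)
    exact EF.right a (Submodule.injective_subtype _) (LinearMap.surjective_rangeRestrict _)
      (C.exZ n) (EF.of_injective a p) (h2 (p+1))

theorem Cx.EFZ (a : Ideal R) (C : Cx R) (hC : C.Inj) (n : ℕ)
    (h : ∀ i ≤ n, Module.Finite R (C.H i)) (p : ℕ) : EF a (p+1) (C.Z n) :=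
  EF.mid a (Submodule.inclusion_injective _) (Submodule.mkQ_surjective _) (C.exB n)
    (C.EFB a hC n (fun i hi => h i hi.le) p) (EF.of_finite a (h n le_rfl) _)

/-- map from tb B -/
def Cx.tB (a : Ideal R) (C : Cx R) (n : ℕ) :
    (tb a (C.B (n+1)) ⧸ LinearMap.range (tbMap a (C.d (n+1)).rangeRestrict)) →ₗ[R]
      (C.T a).H (n+1) :=
  Submodule.liftQ _ ((Submodule.mkQ _) ∘ₗ
      (LinearMap.codRestrict ((C.T a).Z (n+1))
        (show tb a (C.B (n+1)) →ₗ[R] (C.T a).X (n+2) from tbMap a (C.B (n+1)).subtype)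
        (fun b => Cx.T_mem_Z.2 (C.BZ (n+1) b.1.2))))
    (by
      rintro _ ⟨t, rfl⟩
      refine mkQz.2 ?_
      exact Cx.T_mem_B.2 ⟨t, t.2, rfl⟩)

theorem Cx.tB_ex (a : Ideal R) (C : Cx R) (n : ℕ) (q : (C.T a).H (n+1)) (hq : C.th a (n+1) q = 0) :
    ∃ y, C.tB a n y = q := by
  obtain ⟨w, hw, rfl⟩ := sq_surj q
  rw [Cx.th, sqMap_k, sqk_zero] at hq
  have : (⟨_, hq⟩ : C.B (n+1)) ∈ tb a (C.B (n+1)) := by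
    intro r hr
    exact Subtype.ext (C.tv_mem a _ w r hr)
  exact ⟨Submodule.Quotient.mk ⟨_, this⟩, rfl⟩

theorem Cx.T_fin (a : Ideal R) (C : Cx R) (hC : C.Inj) (n : ℕ)
    (h : ∀ i ≤ n, Module.Finite R (C.H i)) : Module.Finite R ((C.T a).H n) := by
  have hn := h n le_rfl
  cases n with
  | zero =>
    refine Module.Finite.of_injective (C.th a 0) ?_
    rw [← LinearMap.ker_eq_bot, LinearMap.ker_eq_bot']
    intro q hq
    obtain ⟨w, hw, rfl⟩ := sq_surj q
    rw [Cx.th, sqMap_k, sqk_zero, Cx.mem_B0] at hq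
    rw [sqk_zero, Cx.mem_B0]
    exact C.tv_inj a 1 hq
  | succ n =>
    refine fin_mid _ _ (C.tB_ex a n) ?_ hn
    exact EF1_quot a (Submodule.injective_subtype _) (LinearMap.surjective_rangeRestrict _)
      (C.exZ n) (C.EFZ a hC n (fun i hi => h i (by omega)) 0)

theorem Cx.H_fin (a : Ideal R) (C : Cx R) (hC : C.Inj) (d k : ℕ)
    (he : ∀ n ≤ d, Module.Finite R ((C.T a).H n))
    (hk : ∀ n, ∀ r ∈ a ^ k, ∀ q : C.H n, r • q = 0) :
    ∀ n ≤ d, Module.Finite R (C.H n) := by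
  intro n
  induction n using Nat.strong_induction_on with
  | _ n ih =>
    intro hn
    have h1 : EF a 1 (C.B n) := C.EFB a hC n (fun i hi => ih i hi (by omega)) 0
    have h2 := EF1_quot a (Submodule.inclusion_injective _) (Submodule.mkQ_surjective _)
      (C.exB n) h1
    have h3 : Module.Finite R (tb a (C.H n)) := by
      refine fin_mid (LinearMap.codRestrict (tb a (C.H n)) (C.th a n) (C.th_mem a n))
        (Submodule.mkQ (LinearMap.range (tbMap a ((C.B n).submoduleOf (C.Z n)).mkQ))) ?_
        (he n hn) h2
      intro y hy
      rw [mkQz] at hy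
      obtain ⟨z, rfl⟩ := hy
      refine ⟨sqk (C.tk a (n+1) z.1.1 (fun r hr => congrArg Subtype.val (z.2 r hr)))
        (Cx.T_mem_Z.2 z.1.2), rfl⟩
    exact FGm.finite (FGm.of_pow a (FGm.of_finite _ h3) k (fun x r hr => hk n r hr x))

/-- hypotheses of the induction -/
structure Hyp (a : Ideal R) (d : ℕ) (I : Ideal R) (C : Cx R) : Prop where
  inj : C.Inj
  tors : ∀ n, IsTors a (C.H n)
  ef : ∀ n ≤ d, Module.Finite R ((C.T a).H n)
  nil : ∀ y ∈ I, ∃ m : ℕ, ∀ n (q : C.H n), (y ^ m) • q = 0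

theorem Hyp.K {a : Ideal R} {d : ℕ} {I : Ideal R} {C : Cx R} (h : Hyp a d I C) {x : R}
    (hx : x ∈ a) : Hyp a d (I ⊔ Ideal.span {x}) (Kz x C) where
  inj := Kz_inj x C h.inj
  tors := K_tors a x C h.tors
  ef n hn := T_K_fin a x hx C n (fun i hi => h.ef i (by omega))
  nil := by
    let J : Ideal R := ⨅ n, Module.annihilator R ((Kz x C).H n)
    have hJ : ∀ r, r ∈ J ↔ ∀ n (q : (Kz x C).H n), r • q = 0 := by
      intro r
      simp [J, Submodule.mem_iInf, Module.mem_annihilator]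
    have : I ⊔ Ideal.span {x} ≤ J.radical := by
      refine sup_le ?_ ?_
      · intro y hy
        obtain ⟨m, hm⟩ := h.nil y hy
        refine ⟨m * 2, (hJ _).2 ?_⟩
        rw [pow_mul]
        exact K_kill_sq x (y ^ m) C hm
      · rw [Ideal.span_le, Set.singleton_subset_iff]
        refine ⟨1, (hJ _).2 ?_⟩
        rw [pow_one]
        exact K_kill x C
    intro y hy
    obtain ⟨m, hm⟩ := this hy
    exact ⟨m, (hJ _).1 hm⟩

theorem Hyp.fin {a : Ideal R} {d : ℕ} {I : Ideal R} {C : Cx R} (h : Hyp a d I C) (hI : a ≤ I) :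
    ∀ n ≤ d, Module.Finite R (C.H n) := by
  let J : Ideal R := ⨅ n, Module.annihilator R (C.H n)
  have hJ : ∀ r, r ∈ J ↔ ∀ n (q : C.H n), r • q = 0 := by
    intro r
    simp [J, Submodule.mem_iInf, Module.mem_annihilator]
  obtain ⟨k, hk⟩ := Ideal.exists_pow_le_of_le_radical_of_fg (I := a) (J := J)
    (fun y hy => by
      obtain ⟨m, hm⟩ := h.nil y (hI hy)
      exact ⟨m, (hJ _).2 hm⟩) (IsNoetherian.noetherian a)
  exact C.H_fin a h.inj d k h.ef (fun n r hr q => (hJ r).1 (hk hr) n q)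

theorem pick {a : Ideal R} {d : ℕ} (I : Ideal R) (hI : ¬ a ≤ I) (C : Cx R) (m : ℕ)
    (h : ∀ i < m, AA a (d - i) (C.H i)) :
    ∃ x ∈ a, x ∉ I ∧ ∀ i < m, FGm (dimSet R (d - i))
      (C.H i ⧸ LinearMap.range (LinearMap.lsmul R (C.H i) x)) := by
  choose! P hP1 hP2 hP3 using fun i hi => good_exists (h i hi)
  obtain ⟨x, hx, hxI, hxP⟩ := avoid a I hI (⋃ i ∈ Finset.range m, P i)
    (Set.Finite.biUnion (Finset.finite_toSet _) (fun i hi => hP1 i (Finset.mem_range.1 hi)))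
    (by
      intro p hp
      simp only [Set.mem_iUnion] at hp
      obtain ⟨i, hi, hp⟩ := hp
      exact hP2 i (Finset.mem_range.1 hi) p hp)
  refine ⟨x, hx, hxI, fun i hi => hP3 i hi x hx (fun p hp => hxP p ?_)⟩
  simp only [Set.mem_iUnion]
  exact ⟨i, Finset.mem_range.2 hi, hp⟩

theorem Kz_good {d m : ℕ} (x : R) (C : Cx R)
    (h : ∀ i ≤ m, FGm (dimSet R (d + 1 - i)) (C.H i))
    (hx : ∀ i < m, FGm (dimSet R (d - i)) (C.H i ⧸ LinearMap.range (LinearMap.lsmul R (C.H i) x))) :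
    ∀ i ≤ m, FGm (dimSet R (d + 1 - i)) ((Kz x C).H i) := by
  intro i hi
  cases i with
  | zero => exact K_FGm0 x C (h 0 hi)
  | succ i =>
    refine K_FGm x C i (h _ hi) ?_
    rw [Nat.add_sub_add_right]
    exact hx i (by omega)

theorem Sind (a : Ideal R) (d : ℕ) (i : ℕ) : i ≤ d → ∀ (I : Ideal R) (C : Cx R), Hyp a d I C →
    (∀ i' ≤ i, FGm (dimSet R (d + 1 - i')) (C.H i')) → AA a (d - i) (C.H i) := by
  induction i using Nat.strong_induction_on with
  | _ i ih =>
    intro hi I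
    induction I using WellFoundedGT.induction with
    | _ I ihI =>
      intro C hC hg
      by_cases hI : a ≤ I
      · exact AA.of_finite (hC.fin hI i hi) (hC.tors i)
      obtain ⟨x, hx, hxI, hxg⟩ := pick (d := d) I hI C i (fun i' hi' => ih i' hi' (by omega) I C hC
        (fun j hj => hg j (by omega)))
      have hlt : I < I ⊔ Ideal.span {x} := by
        refine lt_of_le_of_ne le_sup_left (fun h => hxI ?_)
        rw [h]
        exact Ideal.mem_sup_right (Ideal.mem_span_singleton_self x)
      have h1 := ihI _ hlt (Kz x C) (hC.K hx) (Kz_good x C hg hxg)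
      refine ⟨hC.tors i, ?_, K_descend x hx C i h1⟩
      rw [show d - i + 1 = d + 1 - i by omega]
      exact hg i le_rfl

theorem Sfin (a : Ideal R) (d : ℕ) : ∀ (I : Ideal R) (C : Cx R), Hyp a d I C →
    (∀ i, FGm (dimSet R (d + 1 - i)) (C.H i)) → ∀ n, Module.Finite R ((C.T a).H n) := by
  intro I
  induction I using WellFoundedGT.induction with
  | _ I ihI =>
    intro C hC hg n
    have hbig : ∀ i, d < i → Module.Finite R (C.H i) := by
      intro i hi
      have := hg i
      rw [show d + 1 - i = 0 by omega, dimSet_zero] at this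
      exact this.finite
    by_cases hI : a ≤ I
    · refine C.T_fin a hC.inj n (fun i _ => ?_)
      rcases le_or_gt i d with h | h
      · exact hC.fin hI i h
      · exact hbig i h
    obtain ⟨x, hx, hxI, hxg⟩ := pick (d := d) I hI C (d+1) (fun i hi => Sind a d i (by omega) I C hC
        (fun j _ => hg j))
    have hlt : I < I ⊔ Ideal.span {x} := by
      refine lt_of_le_of_ne le_sup_left (fun h => hxI ?_)
      rw [h]
      exact Ideal.mem_sup_right (Ideal.mem_span_singleton_self x)
    refine T_of_K_fin a x hx C n (ihI _ hlt (Kz x C) (hC.K hx) (fun i => ?_) n)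
    refine Kz_good (m := i) x C (fun j _ => hg j) (fun j _ => ?_) i le_rfl
    rcases le_or_gt j d with h | h
    · exact hxg j (by omega)
    · exact FGm.of_surj _ (Submodule.mkQ_surjective _) (FGm.of_finite _ (hbig j h))

end
end Cof

namespace Cof
open CategoryTheory
section
variable {R : Type u} [CommRing R]

/-- chosen injective overmodule -/
noncomputable def ov (N : ModuleCat.{u} R) : ModuleCat.{u} R := Injective.under N

/-- embedding -/
noncomputable def ovi (N : ModuleCat.{u} R) : N →ₗ[R] ov N := (Injective.ι N).hom

theorem ovi_inj (N : ModuleCat.{u} R) : Function.Injective (ovi N) :=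
  (ModuleCat.mono_iff_injective (Injective.ι N)).1 inferInstance

theorem ov_injective (N : ModuleCat.{u} R) : Module.Injective R (ov N) :=
  Module.injective_module_of_injective_object R (ov N) (inj := by
    change Injective (Injective.under N); infer_instance)

/-- cosyzygies -/
noncomputable def cosy (N : ModuleCat.{u} R) : ℕ → ModuleCat.{u} R
  | 0 => N
  | n+1 => ModuleCat.of R (ov (cosy N n) ⧸ LinearMap.range (ovi (cosy N n)))

/-- terms -/
noncomputable def resX (N : ModuleCat.{u} R) : ℕ → ModuleCat.{u} R
  | 0 => ModuleCat.of R PUnit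
  | n+1 => ov (cosy N n)

/-- projection -/
noncomputable def resp (N : ModuleCat.{u} R) (n : ℕ) : ov (cosy N n) →ₗ[R] cosy N (n+1) :=
  (LinearMap.range (ovi (cosy N n))).mkQ

theorem resp_surj (N : ModuleCat.{u} R) (n : ℕ) : Function.Surjective (resp N n) :=
  Submodule.mkQ_surjective _

theorem resp_zero (N : ModuleCat.{u} R) (n : ℕ) (x) :
    resp N n x = 0 ↔ ∃ y, ovi (cosy N n) y = x := mkQz

/-- differentials -/
noncomputable def resd (N : ModuleCat.{u} R) : ∀ n, resX N n →ₗ[R] resX N (n+1)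
  | 0 => 0
  | n+1 => ovi (cosy N (n+1)) ∘ₗ resp N n

/-- resolution -/
noncomputable def res (N : ModuleCat.{u} R) : Cx R where
  X n := resX N n
  d := resd N
  dd n x := by
    cases n with
    | zero => change resd N 1 0 = 0; rw [map_zero]
    | succ n =>
      change ovi (cosy N (n+2)) (resp N (n+1) (ovi (cosy N (n+1)) (resp N n x))) = 0
      rw [(resp_zero N (n+1) _).2 ⟨_, rfl⟩, map_zero]
  sub := inferInstanceAs (Subsingleton PUnit)

theorem exists_res (N : ModuleCat.{u} R) : ∃ C : Cx R, C.Inj ∧ Nonempty (N ≃ₗ[R] C.Z 0) ∧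
    ∀ n, C.Z (n+1) ≤ C.B (n+1) := by
  have hmem : ∀ n (x : ov (cosy N n)), ovi (cosy N (n+1)) (resp N n x) = 0 →
      ∃ y, ovi (cosy N n) y = x := by
    intro n x hx
    rw [← resp_zero]
    apply ovi_inj
    rw [hx, map_zero]
  refine ⟨res N, ?_, ?_, ?_⟩
  · intro n
    cases n with
    | zero =>
      have := (res N).sub
      exact ⟨fun _ _ _ _ _ _ _ _ _ => ⟨0, fun _ => Subsingleton.elim _ _⟩⟩
    | succ n => exact ov_injective _
  · let f : N →ₗ[R] (res N).Z 0 := LinearMap.codRestrict ((res N).Z 0) (ovi (cosy N 0)) (by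
      intro c
      change ovi (cosy N 1) (resp N 0 (ovi (cosy N 0) c)) = 0
      have h0 : resp N 0 (ovi (cosy N 0) (show cosy N 0 from c)) = 0 :=
        (resp_zero N 0 _).2 ⟨_, rfl⟩
      exact (congrArg (ovi (cosy N 1)) h0).trans (map_zero _))
    refine ⟨LinearEquiv.ofBijective f ⟨?_, ?_⟩⟩
    · intro x y h
      exact ovi_inj N (congrArg Subtype.val h)
    · intro z
      obtain ⟨y, hy⟩ := hmem 0 z.1 z.2
      exact ⟨y, Subtype.ext hy⟩
  · intro n x hx
    obtain ⟨y, hy⟩ := hmem (n+1) x hx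
    obtain ⟨w, hw⟩ := resp_surj N n y
    refine ⟨w, ?_⟩
    rw [← hw] at hy
    exact hy

variable [IsNoetherianRing R]

theorem Cx.dimshift (a : Ideal R) (C : Cx R) (hC : C.Inj) (hZ : ∀ n, C.Z (n+1) ≤ C.B (n+1))
    (n : ℕ) : ∀ p, EF a (p+1) (C.Z n) ↔ EF a (n+p+1) (C.Z 0) := by
  induction n with
  | zero => intro p; rw [show 0 + p + 1 = p + 1 by omega]
  | succ n ih =>
    intro p
    have := hC (n+1)
    have e : C.B (n+1) = C.Z (n+1) := le_antisymm (C.BZ _) (hZ n)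
    rw [show n + 1 + p + 1 = n + (p+1) + 1 by omega, ← ih]
    constructor
    · intro h
      exact EF.left a (Submodule.injective_subtype _) (LinearMap.surjective_rangeRestrict _)
        (C.exZ n) (EF.equiv a (p+1) (LinearEquiv.ofEq _ _ e.symm) h) (EF.of_injective a _)
    · intro h
      refine EF.equiv a (p+1) (LinearEquiv.ofEq _ _ e) ?_
      exact EF.right a (Submodule.injective_subtype _) (LinearMap.surjective_rangeRestrict _)
        (C.exZ n) (EF.of_injective a p) h

theorem Cx.tB_bij (a : Ideal R) (C : Cx R) (hZ : ∀ n, C.Z (n+1) ≤ C.B (n+1)) (n : ℕ) :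
    Function.Bijective (C.tB a n) := by
  constructor
  · rw [← LinearMap.ker_eq_bot, LinearMap.ker_eq_bot']
    intro q hq
    obtain ⟨b, rfl⟩ := Submodule.mkQ_surjective _ q
    rw [mkQz]
    have h1 := mkQz.1 hq
    obtain ⟨t, ht, h2⟩ := Cx.T_mem_B.1 h1
    exact ⟨⟨t, ht⟩, Subtype.ext (Subtype.ext h2)⟩
  · intro q
    apply C.tB_ex
    obtain ⟨w, hw, h⟩ := sq_surj (C.th a (n+1) q)
    rw [← h, sqk_zero]
    exact hZ n hw

theorem Cx.T_iff (a : Ideal R) (C : Cx R) (hC : C.Inj) (hZ : ∀ n, C.Z (n+1) ≤ C.B (n+1))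
    (n : ℕ) : Module.Finite R ((C.T a).H (n+1)) ↔ EF a (n+1) (C.Z 0) := by
  let e := LinearEquiv.ofBijective _ (C.tB_bij a hZ n)
  have h0 : EF a 1 (C.Z n) ↔ EF a (n+1) (C.Z 0) := C.dimshift a hC hZ n 0
  rw [← h0]
  have := hC (n+1)
  constructor
  · intro h
    exact EF1_of_quot a (Submodule.injective_subtype _) (LinearMap.surjective_rangeRestrict _)
      (C.exZ n) (Module.Finite.equiv e.symm)
  · intro h
    have := EF1_quot a (Submodule.injective_subtype _) (LinearMap.surjective_rangeRestrict _)
      (C.exZ n) h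
    exact Module.Finite.equiv e

theorem Cx.T_zero (a : Ideal R) (C : Cx R) (h : EF a 0 (C.Z 0)) :
    Module.Finite R ((C.T a).H 0) := by
  rw [EF0_iff] at h
  let f : tb a (C.Z 0) →ₗ[R] (C.T a).H 0 := (Submodule.mkQ _) ∘ₗ
      (LinearMap.codRestrict ((C.T a).Z 0)
        (show tb a (C.Z 0) →ₗ[R] (C.T a).X 1 from tbMap a (C.Z 0).subtype)
        (fun b => Cx.T_mem_Z.2 b.1.2))
  refine Module.Finite.of_surjective f ?_
  intro q
  obtain ⟨w, hw, rfl⟩ := sq_surj q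
  have hw' := Cx.T_mem_Z.1 hw
  exact ⟨⟨⟨C.tv a 1 w, hw'⟩, fun r hr => Subtype.ext (C.tv_mem a 1 w r hr)⟩, rfl⟩

theorem FGm.of_tors {a : Ideal R} {D : Set (PrimeSpectrum R)} {X : Type u} [AddCommGroup X]
    [Module R X] (h : IsTors a X) (hD : ∀ p : PrimeSpectrum R, a ≤ p.asIdeal → p ∈ D) :
    FGm D X := by
  refine ⟨⊥, Submodule.fg_bot, fun p hp x => ?_⟩
  obtain ⟨n, hn⟩ := h x
  have : ¬ a ≤ p.asIdeal := fun h => hp (hD p h)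
  obtain ⟨r, hr, hrp⟩ := SetLike.not_le_iff_exists.1 this
  exact ⟨r ^ n, fun h => hrp (p.2.mem_of_pow_mem n h), hn _ (Ideal.pow_mem_pow hr n)⟩

/-- `P_d` -/
theorem Pd (a : Ideal R) (d : ℕ) (N : Type u) [AddCommGroup N] [Module R N] (ht : IsTors a N)
    (hD : ∀ p : PrimeSpectrum R, a ≤ p.asIdeal → p ∈ dimSet R (d+1))
    (h : ∀ i ≤ d, EF a i N) (i : ℕ) : EF a i N := by
  obtain ⟨C, hC, ⟨e⟩, hZ⟩ := exists_res (ModuleCat.of R N)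
  have htors : IsTors a (C.H 0) := by
    refine IsTors.of_surj ((C.B 0).submoduleOf (C.Z 0)).mkQ (Submodule.mkQ_surjective _) ?_
    exact IsTors.of_inj e.symm.toLinearMap e.symm.injective ht
  have hs : ∀ n, Subsingleton (C.H (n+1)) := by
    intro n
    refine subsingleton_of_forall_eq 0 (fun q => ?_)
    obtain ⟨w, hw, rfl⟩ := sq_surj q
    rw [sqk_zero]
    exact hZ n hw
  have hyp : Hyp a d ⊥ C := by
    refine ⟨hC, ?_, ?_, ?_⟩
    · intro n
      cases n with
      | zero => exact htors
      | succ n =>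
        have := hs n
        exact fun x => ⟨0, fun r _ => Subsingleton.elim _ _⟩
    · intro n hn
      cases n with
      | zero => exact C.T_zero a (EF.equiv a 0 e (h 0 hn))
      | succ n => exact (C.T_iff a hC hZ n).2 (EF.equiv a _ e (h _ hn))
    · intro y hy
      refine ⟨1, fun n q => ?_⟩
      rw [(Submodule.mem_bot R).1 hy, pow_one, zero_smul]
  have key := Sfin a d ⊥ C hyp (by
    intro i
    cases i with
    | zero => exact FGm.of_tors htors hD
    | succ n =>
      have := hs n
      exact FGm.of_finite _ inferInstance)
  cases i with
  | zero => exact h 0 (Nat.zero_le _)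
  | succ n => exact EF.equiv a _ e.symm ((C.T_iff a hC hZ n).1 (key _))

end
end Cof

namespace Cof
open CategoryTheory Abelian Limits
section
variable {R : Type u} [CommRing R]

theorem equiv_of_ker {Z A B : Type*} [AddCommGroup Z] [Module R Z] [AddCommGroup A] [Module R A]
    [AddCommGroup B] [Module R B] (v : Z →ₗ[R] A) (w : Z →ₗ[R] B) (hv : Function.Surjective v)
    (hw : Function.Surjective w) (h : ∀ z, v z = 0 ↔ w z = 0) :
    ∃ e : A ≃ₗ[R] B, ∀ z, e (v z) = w z := by
  have hk : LinearMap.ker v = LinearMap.ker w := by ext z; exact h z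
  refine ⟨(v.quotKerEquivOfSurjective hv).symm.trans
    ((Submodule.quotEquivOfEq _ _ hk).trans (w.quotKerEquivOfSurjective hw)), fun z => ?_⟩
  have : (v.quotKerEquivOfSurjective hv).symm (v z) = Submodule.Quotient.mk z := by
    rw [LinearEquiv.symm_apply_eq]; rfl
  simp only [LinearEquiv.trans_apply, this]
  rfl

section
variable (K : ChainComplex (ModuleCat.{u} R)ᵒᵖ ℕ) (n : ℕ)

theorem opc_inj : Function.Injective (K.pOpcycles n).unop.hom :=
  (ModuleCat.mono_iff_injective _).1 inferInstance

theorem opc_surj : Function.Surjective (K.homologyι n).unop.hom :=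
  (ModuleCat.epi_iff_surjective _).1 inferInstance

theorem opc_ex (x : (K.X n).unop) :
    (K.d (n+1) n).unop.hom x = 0 ↔ ∃ c, (K.pOpcycles n).unop.hom c = x := by
  let S : ShortComplex (ModuleCat.{u} R)ᵒᵖ := ShortComplex.mk _ _ (K.d_pOpcycles (n+1) n)
  have hS : S.Exact := ShortComplex.exact_of_g_is_cokernel _ (K.opcyclesIsCokernel (n+1) n (by simp))
  have := (ShortComplex.ShortExact.moduleCat_exact_iff_function_exact S.unop).1 hS.unop
  exact this x

theorem opc_ker (m : ℕ) (hm : (ComplexShape.down ℕ).next n = m) (c : (K.opcycles n).unop) :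
    (K.homologyι n).unop.hom c = 0 ↔ ∃ y, (K.d n m).unop.hom y = (K.pOpcycles n).unop.hom c := by
  let S : ShortComplex (ModuleCat.{u} R)ᵒᵖ := ShortComplex.mk _ _ (K.homologyι_comp_fromOpcycles n m)
  have hS : S.Exact := ShortComplex.exact_of_f_is_kernel _ (K.homologyIsKernel n m hm)
  have := (ShortComplex.ShortExact.moduleCat_exact_iff_function_exact S.unop).1 hS.unop
  refine (this c).trans ?_
  have hd : ∀ y, (K.d n m).unop.hom y =
      (K.pOpcycles n).unop.hom ((K.fromOpcycles n m).unop.hom y) := by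
    intro y
    rw [← K.p_fromOpcycles n m]; rfl
  constructor
  · rintro ⟨y, hy⟩
    exact ⟨y, (hd y).trans (congrArg _ hy)⟩
  · rintro ⟨y, hy⟩
    refine ⟨y, opc_inj K n ?_⟩
    rw [← hy, hd]; rfl
end

variable {X Y : ModuleCat.{u} R} (P : ProjectiveResolution X)

theorem extMk_smul {n : ℕ} (r : R) (f : P.complex.X n ⟶ Y) (hf : P.complex.d (n+1) n ≫ f = 0)
    (hf' : P.complex.d (n+1) n ≫ (r • f) = 0) :
    P.extMk (r • f) (n+1) rfl hf' = r • P.extMk f (n+1) rfl hf := by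
  rw [Ext.smul_eq_comp_mk₀, P.extMk_comp_mk₀]
  congr 1

theorem extMk_zero_iff (n m : ℕ) (hm : (ComplexShape.down ℕ).next n = m)
    (f : P.complex.X n ⟶ Y) (hf : P.complex.d (n+1) n ≫ f = 0) :
    P.extMk f (n+1) rfl hf = 0 ↔ ∃ g : P.complex.X m ⟶ Y, P.complex.d n m ≫ g = f := by
  cases n with
  | succ n =>
    have : m = n := by rw [← hm]; simp
    subst this
    exact P.extMk_eq_zero_iff f _ rfl hf m rfl
  | zero =>
    have hd : P.complex.d 0 m = 0 := P.complex.shape _ _ (by simp)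
    constructor
    · intro h
      simp only [← P.extEquivCohomologyClass.apply_eq_iff_eq,
        ProjectiveResolution.extEquivCohomologyClass_extMk,
        ProjectiveResolution.extEquivCohomologyClass_zero,
        CochainComplex.HomComplex.CohomologyClass.mk_eq_zero_iff] at h
      rw [CochainComplex.HomComplex.Cocycle.toSingleMk_mem_coboundaries_iff _ _ _ _ _ 1 (by simp)] at h
      obtain ⟨g, hg⟩ := h
      have : P.cochainComplex.d (-((0:ℕ):ℤ)) 1 = 0 := by
        apply IsZero.eq_of_tgt
        exact P.cochainComplex.isZero_of_isStrictlyLE 0 1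
      rw [this, zero_comp] at hg
      refine ⟨0, ?_⟩
      rw [comp_zero]
      rw [← cancel_epi (P.cochainComplexXIso (-((0:ℕ):ℤ)) 0 rfl).hom, ← hg, comp_zero]
    · rintro ⟨g, hg⟩
      rw [hd, zero_comp] at hg
      subst hg
      simp

end
end Cof

namespace Cof
open CategoryTheory Abelian Limits
section
variable {R : Type u} [CommRing R]

/-- functor being derived -/
noncomputable abbrev yF (Y : ModuleCat.{u} R) : ModuleCat.{u} R ⥤ (ModuleCat.{u} R)ᵒᵖ :=
  ((linearYoneda R (ModuleCat.{u} R)).obj Y).rightOp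

/-- complex -/
noncomputable abbrev yK {X : ModuleCat.{u} R} (P : ProjectiveResolution X) (Y : ModuleCat.{u} R) :
    ChainComplex (ModuleCat.{u} R)ᵒᵖ ℕ :=
  ((yF Y).mapHomologicalComplex _).obj P.complex

/-- old Ext -/
noncomputable abbrev oX (n : ℕ) (X Y : ModuleCat.{u} R) : ModuleCat.{u} R :=
  ((Ext R (ModuleCat.{u} R) n).obj (Opposite.op X)).obj Y

variable {X Y : ModuleCat.{u} R} (P : ProjectiveResolution X)

/-- iso -/
noncomputable def isoO (Y : ModuleCat.{u} R) (n : ℕ) :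
    ((yF Y).leftDerived n).obj X ≅ (yK P Y).homology n :=
  P.isoLeftDerivedObj (yF Y) n

theorem isoO_nat {X' : ModuleCat.{u} R} (P' : ProjectiveResolution X') (g : X' ⟶ X)
    (φ : ProjectiveResolution.Hom P' P g) (n : ℕ) :
    ((yF Y).leftDerived n).map g ≫ (isoO P Y n).hom = (isoO P' Y n).hom ≫
      HomologicalComplex.homologyMap (((yF Y).mapHomologicalComplex _).map φ.hom) n :=
  ProjectiveResolution.isoLeftDerivedObj_hom_naturality g P' P φ.hom
    φ.hom_f_zero_comp_π_f_zero (yF Y) n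

/-- iso as linear equiv -/
noncomputable def isoOL (Y : ModuleCat.{u} R) (n : ℕ) :
    ((yK P Y).homology n).unop ≃ₗ[R] oX n X Y :=
  (isoO P Y n).unop.toLinearEquiv

/-- cocycles to old Ext -/
noncomputable def cocO (n : ℕ) : ((yK P Y).opcycles n).unop →ₗ[R] oX n X Y :=
  (isoOL P Y n).toLinearMap ∘ₗ ((yK P Y).homologyι n).unop.hom

theorem cocO_eq (n : ℕ) (c) : cocO (Y := Y) P n c =
    ((isoO P Y n).hom ≫ (yK P Y).homologyι n).unop.hom c := rfl

/-- underlying hom of cocycle -/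
noncomputable def cocH (n : ℕ) : ((yK P Y).opcycles n).unop →ₗ[R] (P.complex.X n ⟶ Y) :=
  ((yK P Y).pOpcycles n).unop.hom

theorem cocH_inj (n : ℕ) : Function.Injective (cocH (Y := Y) P n) := opc_inj _ n

theorem cocH_iff (n : ℕ) (x : P.complex.X n ⟶ Y) :
    P.complex.d (n+1) n ≫ x = 0 ↔ ∃ c, cocH P n c = x := opc_ex (yK P Y) n x

theorem cocH_d (n : ℕ) (c) : P.complex.d (n+1) n ≫ cocH (Y := Y) P n c = 0 :=
  (cocH_iff P n _).2 ⟨c, rfl⟩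

theorem cocO_surj (n : ℕ) : Function.Surjective (cocO (Y := Y) P n) :=
  (isoOL P Y n).surjective.comp (opc_surj _ n)

theorem cocO_ker (n m : ℕ) (hm : (ComplexShape.down ℕ).next n = m) (c) :
    (cocO (Y := Y) P n) c = 0 ↔ ∃ g : P.complex.X m ⟶ Y, P.complex.d n m ≫ g = cocH P n c :=
  ((isoOL P Y n).map_eq_zero_iff).trans (opc_ker (yK P Y) n m hm c)

/-- cocycles to new Ext -/
noncomputable def cocN (n : ℕ) : ((yK P Y).opcycles n).unop →ₗ[R] Ext.{u} X Y n where
  toFun c := P.extMk (cocH P n c) (n+1) rfl (cocH_d P n c)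
  map_add' c d := by
    rw [P.add_extMk]
    congr 1
    exact map_add _ _ _
  map_smul' r c := by
    rw [RingHom.id_apply, ← extMk_smul P r _ _ (by
      have := cocH_d P n (r • c)
      rwa [map_smul] at this)]
    congr 1
    exact map_smul _ _ _

theorem cocN_surj (n : ℕ) : Function.Surjective (cocN (Y := Y) P n) := by
  intro α
  obtain ⟨f, hf, rfl⟩ := P.extMk_surjective α (n+1) rfl
  obtain ⟨c, rfl⟩ := (cocH_iff P n f).1 hf
  exact ⟨c, rfl⟩

theorem exists_e (n : ℕ) : ∃ e : oX n X Y ≃ₗ[R] Ext.{u} X Y n,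
    ∀ c, e (cocO P n c) = cocN P n c := by
  apply equiv_of_ker _ _ (cocO_surj P n) (cocN_surj P n)
  intro c
  rw [cocO_ker P n _ rfl]
  exact (extMk_zero_iff P n _ rfl _ (cocH_d P n c)).symm

/-- comparison -/
noncomputable def oe (n : ℕ) (X Y : ModuleCat.{u} R) : oX n X Y ≃ₗ[R] Ext.{u} X Y n :=
  Classical.choose (exists_e (projectiveResolution X) n)

theorem oe_spec (n : ℕ) (X Y : ModuleCat.{u} R) (c) :
    oe n X Y (cocO (projectiveResolution X) n c) = cocN (projectiveResolution X) n c :=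
  Classical.choose_spec (exists_e (projectiveResolution X) n) c

theorem coc_nat {X' : ModuleCat.{u} R} (P' : ProjectiveResolution X') (g : X' ⟶ X)
    (φ : ProjectiveResolution.Hom P' P g) (n : ℕ) (c : ((yK P Y).opcycles n).unop) :
    ∃ c', (((Ext R (ModuleCat.{u} R) n).map g.op).app Y).hom (cocO P n c) =
      cocO P' n c' ∧ cocH P' n c' = φ.hom.f n ≫ cocH P n c := by
  let ψ : yK P' Y ⟶ yK P Y := ((yF Y).mapHomologicalComplex _).map φ.hom
  have h1 := isoO_nat (Y := Y) P P' g φ n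
  have h2 := HomologicalComplex.homologyι_naturality ψ n
  have h3 := HomologicalComplex.p_opcyclesMap ψ n
  refine ⟨(HomologicalComplex.opcyclesMap ψ n).unop.hom c, ?_, ?_⟩
  · have h4 : ((yF Y).leftDerived n).map g ≫ (isoO P Y n).hom ≫
        (yK P Y).homologyι n = ((isoO P' Y n).hom ≫ (yK P' Y).homologyι n) ≫
        HomologicalComplex.opcyclesMap ψ n := by
      rw [← Category.assoc, h1, Category.assoc, Category.assoc, ← h2]
    exact congrArg (fun f => f.unop.hom c) h4
  · exact congrArg (fun f => f.unop.hom c) h3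

theorem oe_nat {X' : ModuleCat.{u} R} (g : X' ⟶ X) (n : ℕ) (x : oX n X Y) :
    oe n X' Y ((((Ext R (ModuleCat.{u} R) n).map g.op).app Y).hom x) =
      (Ext.mk₀ g).comp (oe n X Y x) (zero_add n) := by
  obtain ⟨c, rfl⟩ := cocO_surj (projectiveResolution X) n x
  let φ : ProjectiveResolution.Hom (projectiveResolution X') (projectiveResolution X) g :=
    ⟨ProjectiveResolution.lift g _ _, ProjectiveResolution.lift_commutes_zero g _ _⟩
  obtain ⟨c', h1, h2⟩ := coc_nat (projectiveResolution X) (projectiveResolution X') g φ n c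
  rw [h1, oe_spec, oe_spec]
  refine Eq.trans ?_ (ProjectiveResolution.mk₀_comp_extMk (cocH (projectiveResolution X) n c)
    (n+1) rfl (cocH_d _ n c) φ).symm
  change (projectiveResolution X').extMk (cocH (projectiveResolution X') n c') (n+1) rfl
    (cocH_d _ n c') = _
  congr 1

end
end Cof

namespace Cof
open CategoryTheory Abelian Limits Opposite
section
variable {R : Type u} [CommRing R]

/-- quotient map -/
def qMap {b c : Ideal R} (h : b ≤ c) : (R ⧸ b) →ₗ[R] (R ⧸ c) := Submodule.mapQ b c LinearMap.id h

variable {A B C : Type u} [AddCommGroup A] [Module R A] [AddCommGroup B] [Module R B]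
  [AddCommGroup C] [Module R C]

/-- restriction -/
noncomputable def xtRes {b c : Ideal R} (h : b ≤ c) (n : ℕ) : XT c n A →ₗ[R] XT b n A :=
  (Ext.mk₀ (ModuleCat.ofHom (qMap h))).precompOfLinear R (ModuleCat.of R A) (zero_add n)

theorem xtRes_map {b c : Ideal R} (h : b ≤ c) (n : ℕ) (f : A →ₗ[R] B) (x : XT c n A) :
    xtRes h n (xtMap c n f x) = xtMap b n f (xtRes h n x) := by
  change (Ext.mk₀ _).comp (x.comp (Ext.mk₀ _) (add_zero n)) (zero_add n) =
    ((Ext.mk₀ _).comp x (zero_add n)).comp (Ext.mk₀ _) (add_zero n)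
  rw [Ext.comp_assoc_of_third_deg_zero]

theorem xtRes_del {b c : Ideal R} (h : b ≤ c) (n : ℕ) {f : A →ₗ[R] B} {g : B →ₗ[R] C}
    (hf : Function.Injective f)
    (hg : Function.Surjective g) (he : Function.Exact f g) (x : XT c n C) :
    xtRes h (n+1) (xtDel c n hf hg he x) = xtDel b n hf hg he (xtRes h n x) := by
  change (Ext.mk₀ _).comp (x.comp _ rfl) (zero_add (n+1)) =
    ((Ext.mk₀ _).comp x (zero_add n)).comp _ rfl
  rw [Ext.comp_assoc (a₁₂ := n) (a₂₃ := n+1) (h₁₂ := zero_add n) (h₂₃ := rfl) (h := by omega)]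

theorem xtRes_res {b c d : Ideal R} (h : b ≤ c) (h' : c ≤ d) (n : ℕ) (x : XT d n A) :
    xtRes h n (xtRes h' n x) = xtRes (h.trans h') n x := by
  change (Ext.mk₀ _).comp ((Ext.mk₀ _).comp x (zero_add n)) (zero_add n) =
    (Ext.mk₀ _).comp x (zero_add n)
  rw [← Ext.comp_assoc (a₁ := 0) (a₂ := 0) (a₃ := n) (a := n) (a₁₂ := 0) (a₂₃ := n) (h₁₂ := zero_add 0) (h₂₃ := zero_add n)
    (h := by omega), Ext.mk₀_comp_mk₀,
    ← ModuleCat.ofHom_comp]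
  congr 3
  apply LinearMap.ext
  intro y
  obtain ⟨y, rfl⟩ := Submodule.mkQ_surjective _ y
  rfl

theorem xt0_res {b c : Ideal R} (h : b ≤ c) (x : XT c 0 A) :
    ((xt0 b A (xtRes h 0 x) : tb b A) : A) = xt0 c A x := by
  obtain ⟨φ, rfl⟩ := Ext.linearEquiv₀ (R := R).symm.surjective x
  have : xtRes h 0 (Ext.linearEquiv₀ (R := R).symm φ) =
      Ext.linearEquiv₀ (R := R).symm (ModuleCat.ofHom (qMap h) ≫ φ) := by
    simp [xtRes, Ext.mk₀_comp_mk₀]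
  rw [this]
  simp only [xt0, LinearEquiv.trans_apply, LinearEquiv.apply_symm_apply]
  rfl

/-- L is the local cohomology -/
def IsLC (a : Ideal R) (n : ℕ) (N : Type u) [AddCommGroup N] [Module R N]
    (L : Type u) [AddCommGroup L] [Module R L] : Prop :=
  ∃ j : ∀ t : ℕ, XT (a ^ t) n N →ₗ[R] L,
    (∀ (s t : ℕ) (h : s ≤ t) (x), j t (xtRes (Ideal.pow_le_pow_right h) n x) = j s x) ∧
    (∀ l, ∃ t x, j t x = l) ∧
    (∀ t x, j t x = 0 → ∃ s, ∃ h : t ≤ s, xtRes (Ideal.pow_le_pow_right (I := a) h) n x = 0)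

theorem lim_uniq (E : ℕ → Type u) [∀ t, AddCommGroup (E t)] [∀ t, Module R (E t)]
    (τ : ∀ s t : ℕ, s ≤ t → E s →ₗ[R] E t) {L L' : Type u}
    [AddCommGroup L] [Module R L] [AddCommGroup L'] [Module R L']
    (j : ∀ t, E t →ₗ[R] L) (k : ∀ t, E t →ₗ[R] L')
    (j1 : ∀ s t h x, j t (τ s t h x) = j s x) (j2 : ∀ l, ∃ t x, j t x = l)
    (j3 : ∀ t x, j t x = 0 → ∃ s, ∃ h : t ≤ s, τ t s h x = 0)
    (k1 : ∀ s t h x, k t (τ s t h x) = k s x) (k2 : ∀ l, ∃ t x, k t x = l)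
    (k3 : ∀ t x, k t x = 0 → ∃ s, ∃ h : t ≤ s, τ t s h x = 0) : Nonempty (L ≃ₗ[R] L') := by
  classical
  let v : (DirectSum ℕ E) →ₗ[R] L := DirectSum.toModule R ℕ L j
  let w : (DirectSum ℕ E) →ₗ[R] L' := DirectSum.toModule R ℕ L' k
  have hv : ∀ t x, v (DirectSum.lof R ℕ _ t x) = j t x := fun t x => DirectSum.toModule_lof R t x
  have hw : ∀ t x, w (DirectSum.lof R ℕ _ t x) = k t x := fun t x => DirectSum.toModule_lof R t x
  have key : ∀ z, ∃ t x, v z = j t x ∧ w z = k t x := by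
    intro z
    induction z using DirectSum.induction_on with
    | zero => exact ⟨0, 0, by simp, by simp⟩
    | of i x => exact ⟨i, x, hv i x, hw i x⟩
    | add z z' hz hz' =>
      obtain ⟨t, x, h1, h2⟩ := hz
      obtain ⟨t', x', h1', h2'⟩ := hz'
      refine ⟨max t t', τ _ _ (le_max_left _ _) x + τ _ _ (le_max_right _ _) x', ?_, ?_⟩
      · rw [map_add, map_add, j1, j1, h1, h1']
      · rw [map_add, map_add, k1, k1, h2, h2']
  obtain ⟨e, -⟩ := equiv_of_ker v w
    (fun l => by obtain ⟨t, x, h⟩ := j2 l; exact ⟨_, (hv t x).trans h⟩)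
    (fun l => by obtain ⟨t, x, h⟩ := k2 l; exact ⟨_, (hw t x).trans h⟩) (by
      intro z
      obtain ⟨t, x, h1, h2⟩ := key z
      rw [h1, h2]
      constructor
      · intro h
        obtain ⟨s, hs, h⟩ := j3 t x h
        rw [← k1 t s hs, h, map_zero]
      · intro h
        obtain ⟨s, hs, h⟩ := k3 t x h
        rw [← j1 t s hs, h, map_zero])
  exact ⟨e⟩

theorem IsLC.uniq {a : Ideal R} {n : ℕ} {N L L' : Type u} [AddCommGroup N] [Module R N]
    [AddCommGroup L] [Module R L] [AddCommGroup L'] [Module R L']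
    (h : IsLC a n N L) (h' : IsLC a n N L') : Nonempty (L ≃ₗ[R] L') := by
  obtain ⟨j, j1, j2, j3⟩ := h
  obtain ⟨k, k1, k2, k3⟩ := h'
  exact lim_uniq (fun t => XT (a ^ t) n N)
    (fun s t h => xtRes (Ideal.pow_le_pow_right h) n) j k j1 j2 j3 k1 k2 k3

theorem IsLC_lc (a : Ideal R) (n : ℕ) (N : ModuleCat.{u} R) :
    IsLC a n N ((localCohomology a n).obj N) := by
  let F := localCohomology.diagram (localCohomology.idealPowersDiagram a) n
  let ev := (evaluation (ModuleCat.{u} R) (ModuleCat.{u} R)).obj N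
  have : HasColimit F := localCohomology.hasColimitDiagram _ n
  have hc : IsColimit (ev.mapCocone (colimit.cocone F)) :=
    isColimitOfPreserves ev (colimit.isColimit F)
  have : PreservesFilteredColimitsOfSize.{0, 0} (forget (ModuleCat.{u} R)) :=
    preservesFilteredColimitsOfSize_shrink.{0, u, 0, u} _
  have : PreservesColimit (F ⋙ ev) (forget (ModuleCat.{u} R)) :=
    (PreservesFilteredColimitsOfSize.preserves_filtered_colimits ℕᵒᵖᵒᵖ).preservesColimit
  let e : ∀ t : ℕ, oX n (ModuleCat.of R (R ⧸ a ^ t)) N ≃ₗ[R] XT (a ^ t) n N := fun t =>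
    oe n (ModuleCat.of R (R ⧸ a ^ t)) N
  let ι : ∀ t : ℕ, oX n (ModuleCat.of R (R ⧸ a ^ t)) N →ₗ[R] (localCohomology a n).obj N :=
    fun t => ((ev.mapCocone (colimit.cocone F)).ι.app (op (op t))).hom
  let τ : ∀ s t : ℕ, s ≤ t → oX n (ModuleCat.of R (R ⧸ a ^ s)) N →ₗ[R]
      oX n (ModuleCat.of R (R ⧸ a ^ t)) N := fun s t h =>
    ((((_root_.Ext R (ModuleCat.{u} R) n).map
      (ModuleCat.ofHom (qMap (Ideal.pow_le_pow_right (I := a) h))).op)).app N).hom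
  have hτ : ∀ s t h x, e t (τ s t h x) = xtRes (Ideal.pow_le_pow_right h) n (e s x) :=
    fun s t h x => oe_nat _ n x
  have hι : ∀ s t h x, ι t (τ s t h x) = ι s x := by
    intro s t h x
    have := (ev.mapCocone (colimit.cocone F)).w (homOfLE h).op.op
    exact congrArg (fun f => f.hom x) this
  refine ⟨fun t => ι t ∘ₗ (e t).symm.toLinearMap, ?_, ?_, ?_⟩
  · intro s t h x
    obtain ⟨x, rfl⟩ := (e s).surjective x
    change ι t ((e t).symm _) = ι s ((e s).symm _)
    rw [← hτ s t h, LinearEquiv.symm_apply_apply, LinearEquiv.symm_apply_apply, hι]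
    exact h
  · intro l
    obtain ⟨t, y, hy⟩ := Concrete.isColimit_exists_rep _ hc l
    refine ⟨t.unop.unop, e _ y, ?_⟩
    change ι _ ((e _).symm _) = _
    exact (congrArg (ι _) (LinearEquiv.symm_apply_apply (e _) y)).trans hy
  · intro t x hx
    obtain ⟨x, rfl⟩ := (e t).surjective x
    change ι t ((e t).symm _) = _ at hx
    rw [LinearEquiv.symm_apply_apply] at hx
    have h0 : ι t x = ι t 0 := hx.trans (map_zero _).symm
    obtain ⟨k, f, g, h⟩ := (Concrete.isColimit_rep_eq_iff_exists (F ⋙ ev) (i := op (op t)) (j := op (op t)) hc x 0).1 h0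
    have hts : t ≤ k.unop.unop := leOfHom f.unop.unop
    refine ⟨k.unop.unop, hts, ?_⟩
    rw [← hτ]
    have h2 : τ t k.unop.unop hts x = τ t k.unop.unop hts 0 := h
    rw [h2, map_zero, map_zero]
    exact hts

end
end Cof

namespace Cof
section
variable {R : Type u} [CommRing R]
variable {A B C : Type u} [AddCommGroup A] [Module R A] [AddCommGroup B] [Module R B]
  [AddCommGroup C] [Module R C]

theorem tb_mono {b c : Ideal R} (h : b ≤ c) : tb c A ≤ tb b A := fun _ hx r hr => hx r (h hr)

/-- torsion submodule -/
def Gm (a : Ideal R) (N : Type u) [AddCommGroup N] [Module R N] : Submodule R N where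
  carrier := {x | ∃ t : ℕ, x ∈ tb (a ^ t) N}
  zero_mem' := ⟨0, zero_mem _⟩
  add_mem' := by
    rintro x y ⟨s, hs⟩ ⟨t, ht⟩
    exact ⟨max s t, add_mem (tb_mono (Ideal.pow_le_pow_right (le_max_left s t)) hs)
      (tb_mono (Ideal.pow_le_pow_right (le_max_right s t)) ht)⟩
  smul_mem' := by
    rintro c x ⟨t, ht⟩
    exact ⟨t, Submodule.smul_mem _ c ht⟩

theorem mem_Gm {a : Ideal R} {x : A} : x ∈ Gm a A ↔ ∃ t : ℕ, x ∈ tb (a ^ t) A := Iff.rfl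

theorem Gm_tors (a : Ideal R) : IsTors a (Gm a A) := by
  rintro ⟨x, t, ht⟩
  exact ⟨t, fun r hr => Subtype.ext (ht r hr)⟩

theorem le_Gm {a : Ideal R} {S : Submodule R A} (h : IsTors a S) : S ≤ Gm a A := by
  intro x hx
  obtain ⟨t, ht⟩ := h ⟨x, hx⟩
  exact ⟨t, fun r hr => congrArg Subtype.val (ht r hr)⟩

theorem Gm_map {a : Ideal R} (f : A →ₗ[R] B) {x : A} (hx : x ∈ Gm a A) : f x ∈ Gm a B := by
  obtain ⟨t, ht⟩ := hx
  exact ⟨t, fun r hr => by rw [← map_smul, ht r hr, map_zero]⟩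

variable [IsNoetherianRing R]

theorem Gm_quot (a : Ideal R) : Gm a (A ⧸ Gm a A) = ⊥ := by
  rw [eq_bot_iff]
  intro x hx
  obtain ⟨y, rfl⟩ := Submodule.mkQ_surjective _ x
  let S := (Gm a (A ⧸ Gm a A)).comap (Gm a A).mkQ
  have hle : Gm a A ≤ S := fun z hz => Gm_map _ hz
  have hS : IsTors a S := by
    refine IsTors.of_exact (Submodule.inclusion hle)
      ((Gm a A).mkQ.restrict (p := S) (q := Gm a (A ⧸ Gm a A)) (fun z hz => hz)) ?_
      (Gm_tors a) (Gm_tors a)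
    rintro ⟨z, hz⟩ h
    have h1 : (Gm a A).mkQ z = 0 := congrArg Subtype.val h
    rw [Submodule.mkQ_apply, Submodule.Quotient.mk_eq_zero] at h1
    exact ⟨⟨z, h1⟩, rfl⟩
  have := le_Gm hS (show y ∈ S from hx)
  rw [Submodule.mem_bot, Submodule.mkQ_apply, Submodule.Quotient.mk_eq_zero]
  exact this

theorem fg_tors {a : Ideal R} (h : IsTors a A) [Module.Finite R A] : ∃ t : ℕ, ∀ r ∈ a ^ t, ∀ x : A, r • x = 0 := by
  obtain ⟨S, hS⟩ := Module.Finite.fg_top (R := R) (M := A)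
  choose k hk using h
  refine ⟨S.sup k, fun r hr x => ?_⟩
  have : (⊤ : Submodule R A) ≤ tb (a ^ (S.sup k)) A := by
    rw [← hS, Submodule.span_le]
    intro s hs r hr
    exact hk s r (Ideal.pow_le_pow_right (Finset.le_sup hs) hr)
  exact this (Submodule.mem_top (x := x)) r hr

theorem Gm_injective (a : Ideal R) [Module.Injective R A] : Module.Injective R (Gm a A) := by
  refine Module.Baer.injective ?_
  intro I g
  have h0 : IsTors a (LinearMap.range g) :=
    IsTors.of_inj (LinearMap.range g).subtype Subtype.val_injective (Gm_tors a)
  obtain ⟨t, ht⟩ := fg_tors h0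
  obtain ⟨k, hk⟩ := Ideal.exists_pow_inf_eq_pow_smul a (M := R) I
  have hk := hk (t + k) (by omega)
  have hkill : ∀ (x : I), (x : R) ∈ a ^ (t + k) → g x = 0 := by
    have h1 : (a ^ (t+k) • ⊤ ⊓ I : Submodule R R) ≤ (LinearMap.ker g).map I.subtype := by
      rw [hk, Nat.add_sub_cancel]
      refine (Submodule.smul_mono le_rfl inf_le_right).trans ?_
      rw [Submodule.smul_le]
      intro r hr n hn
      refine ⟨r • ⟨n, hn⟩, ?_, rfl⟩
      simp only [SetLike.mem_coe, LinearMap.mem_ker]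
      rw [map_smul]
      exact congrArg Subtype.val (ht r hr ⟨g ⟨n, hn⟩, ⟨_, rfl⟩⟩)
    intro x hx
    obtain ⟨y, hy, hyx⟩ := h1 (show (x : R) ∈ _ from ⟨by simpa using hx, x.2⟩)
    have : y = x := Subtype.ext hyx
    exact this ▸ hy
  let q : I →ₗ[R] (R ⧸ a ^ (t + k)) := (Submodule.mkQ (a ^ (t + k))) ∘ₗ I.subtype
  have hq : LinearMap.ker q ≤ LinearMap.ker g := by
    intro x hx
    refine hkill x ?_
    have : Submodule.mkQ (a ^ (t + k)) (x : R) = 0 := hx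
    rwa [Submodule.mkQ_apply, Submodule.Quotient.mk_eq_zero] at this
  let f : (I ⧸ LinearMap.ker q) →ₗ[R] (R ⧸ a ^ (t + k)) := (LinearMap.ker q).liftQ q le_rfl
  have hf : Function.Injective f := LinearMap.ker_eq_bot.1 (Submodule.ker_liftQ_eq_bot _ _ _ le_rfl)
  obtain ⟨h, hh⟩ := Module.Injective.out f hf ((Gm a A).subtype ∘ₗ (LinearMap.ker q).liftQ g hq)
  have hmem : h (Submodule.mkQ _ 1) ∈ Gm a A := by
    refine ⟨t + k, fun r hr => ?_⟩
    rw [← map_smul, ← map_smul, smul_eq_mul, mul_one]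
    have : Submodule.mkQ (a ^ (t + k)) r = 0 := by
      rwa [Submodule.mkQ_apply, Submodule.Quotient.mk_eq_zero]
    rw [this, map_zero]
  refine ⟨LinearMap.toSpanSingleton R _ ⟨_, hmem⟩, ?_⟩
  intro x hx
  apply Subtype.ext
  have h3 := hh (Submodule.mkQ _ ⟨x, hx⟩)
  have h4 : f (Submodule.mkQ _ ⟨x, hx⟩) = Submodule.mkQ _ x := rfl
  rw [h4] at h3
  rw [LinearMap.toSpanSingleton_apply]
  change x • h _ = _
  rw [← map_smul, ← map_smul, smul_eq_mul, mul_one, h3]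
  rfl

theorem Gq_injective (a : Ideal R) [Module.Injective R A] : Module.Injective R (A ⧸ Gm a A) := by
  have := Gm_injective (A := A) a
  obtain ⟨r, hr⟩ := Module.Injective.out (Gm a A).subtype Subtype.val_injective (LinearMap.id)
  let s : (A ⧸ Gm a A) →ₗ[R] A := (Gm a A).liftQ (LinearMap.id - (Gm a A).subtype ∘ₗ r) (by
    intro x hx
    have := hr ⟨x, hx⟩
    simp only [LinearMap.mem_ker, LinearMap.sub_apply, LinearMap.id_apply, LinearMap.comp_apply]
    have h2 : r x = ⟨x, hx⟩ := this
    rw [h2]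
    exact sub_self _)
  have hs : ∀ z, (Gm a A).mkQ (s z) = z := by
    intro z
    obtain ⟨y, rfl⟩ := Submodule.mkQ_surjective _ z
    change (Gm a A).mkQ (y - r y) = _
    rw [map_sub, sub_eq_self, Submodule.mkQ_apply, Submodule.Quotient.mk_eq_zero]
    exact (r y).2
  constructor
  intro X Y _ _ _ _ f hf g
  obtain ⟨h, hh⟩ := Module.Injective.out f hf (s ∘ₗ g)
  refine ⟨(Gm a A).mkQ ∘ₗ h, fun x => ?_⟩
  rw [LinearMap.comp_apply, hh, LinearMap.comp_apply, hs]

end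
end Cof

namespace Cof
open CategoryTheory Abelian
section
variable {R : Type u} [CommRing R]
variable {A B C : Type u} [AddCommGroup A] [Module R A] [AddCommGroup B] [Module R B]
  [AddCommGroup C] [Module R C]

theorem xt_inj0 (a : Ideal R) [Module.Injective R A] (n : ℕ) (x : XT a (n+1) A) : x = 0 := by
  have := Module.injective_object_of_injective_module R A
  have : Subsingleton (XT a (n+1) A) := Ext.subsingleton_of_injective _ _ n
  exact Subsingleton.elim _ _

theorem xt_mapdel0 (a : Ideal R) {f : A →ₗ[R] B} {g : B →ₗ[R] C} (hf : Function.Injective f)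
    (hg : Function.Surjective g) (h : Function.Exact f g) (n : ℕ) (x : XT a n C) :
    xtMap a (n+1) f (xtDel a n hf hg h x) = 0 := by
  have := (sesX hf hg h).extClass_comp
  change (x.comp (sesX hf hg h).extClass rfl).comp (Ext.mk₀ (ModuleCat.ofHom f)) (add_zero _) = 0
  rw [Ext.comp_assoc (a₁₂ := n+1) (a₂₃ := 1) (h₁₂ := rfl) (h₂₃ := add_zero 1) (h := by omega)]
  erw [this]
  simp

theorem xt_mapmap0 (a : Ideal R) {f : A →ₗ[R] B} {g : B →ₗ[R] C} 
    (h : Function.Exact f g) (n : ℕ) (x : XT a n A) :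
    xtMap a n g (xtMap a n f x) = 0 := by
  change (x.comp (Ext.mk₀ (ModuleCat.ofHom f)) (add_zero n)).comp (Ext.mk₀ (ModuleCat.ofHom g)) (add_zero n) = 0
  rw [Ext.comp_assoc_of_third_deg_zero, Ext.mk₀_comp_mk₀, ← ModuleCat.ofHom_comp,
    h.linearMap_comp_eq_zero]
  simp

/-- direct limit of `Hom` is the torsion submodule -/
theorem IsLC_zero (a : Ideal R) : IsLC a 0 A (Gm a A) := by
  have hle : ∀ t : ℕ, tb (a ^ t) A ≤ Gm a A := fun t x hx => ⟨t, hx⟩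
  refine ⟨fun t => Submodule.inclusion (hle t) ∘ₗ (xt0 (a ^ t) A).toLinearMap, ?_, ?_, ?_⟩
  · intro s t h x
    exact Subtype.ext (xt0_res (Ideal.pow_le_pow_right h) x)
  · rintro ⟨x, t, ht⟩
    refine ⟨t, (xt0 (a ^ t) A).symm ⟨x, ht⟩, ?_⟩
    apply Subtype.ext
    simp
  · intro t x hx
    refine ⟨t, le_rfl, ?_⟩
    have h1 : ((xt0 (a ^ t) A x : tb (a ^ t) A) : A) = 0 := congrArg Subtype.val hx
    have h2 : x = 0 := (xt0 (a ^ t) A).map_eq_zero_iff.1 (Subtype.ext h1)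
    rw [h2, map_zero]

variable [IsNoetherianRing R]

theorem tors_van (a : Ideal R) (n : ℕ) : ∀ (A : Type u) [AddCommGroup A] [Module R A], IsTors a A →
    ∀ (t : ℕ) (x : XT (a ^ t) (n+1) A), ∃ s, ∃ h : t ≤ s,
      xtRes (Ideal.pow_le_pow_right (I := a) h) (n+1) x = 0 := by
  induction n with
  | zero =>
    intro A _ _ hA t x
    have := ov_injective (ModuleCat.of R A)
    let E := Gm a (ov (ModuleCat.of R A))
    have hE : Module.Injective R E := Gm_injective a
    have hmem : ∀ x : A, ovi (ModuleCat.of R A) x ∈ E := fun x => by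
      obtain ⟨t, ht⟩ := hA x
      exact Gm_map (ovi (ModuleCat.of R A)) ⟨t, ht⟩
    let f : A →ₗ[R] E := (ovi (ModuleCat.of R A)).codRestrict E hmem
    have hf : Function.Injective f := fun x y h => ovi_inj (ModuleCat.of R A) (congrArg Subtype.val h)
    have hg := Submodule.mkQ_surjective (LinearMap.range f)
    have he : Function.Exact f (LinearMap.range f).mkQ := LinearMap.exact_map_mkQ_range f
    obtain ⟨y, rfl⟩ := xt_ex1 (a ^ t) hf hg he 0 x (xt_inj0 _ _ _)
    obtain ⟨z, hz⟩ := hg (xt0 (a ^ t) _ y : E ⧸ LinearMap.range f)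
    obtain ⟨s0, hs0⟩ : ∃ s, z ∈ tb (a ^ s) E := Gm_tors a z
    have hs := le_max_left t s0
    refine ⟨max t s0, hs, ?_⟩
    rw [xtRes_del]
    have hz' : z ∈ tb (a ^ (max t s0)) E :=
      tb_mono (Ideal.pow_le_pow_right (le_max_right _ _)) hs0
    have : xtRes (Ideal.pow_le_pow_right (I := a) hs) 0 y =
        xtMap _ 0 (LinearMap.range f).mkQ ((xt0 _ E).symm ⟨z, hz'⟩) := by
      apply (xt0 _ _).injective
      apply Subtype.ext
      rw [xt0_res, xt0_nat, LinearEquiv.apply_symm_apply, ← hz]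
      rfl
    rw [this, xt_del0]
  | succ n ih =>
    intro A _ _ hA t x
    have := ov_injective (ModuleCat.of R A)
    let E := Gm a (ov (ModuleCat.of R A))
    have hE : Module.Injective R E := Gm_injective a
    have hmem : ∀ x : A, ovi (ModuleCat.of R A) x ∈ E := fun x => by
      obtain ⟨t, ht⟩ := hA x
      exact Gm_map (ovi (ModuleCat.of R A)) ⟨t, ht⟩
    let f : A →ₗ[R] E := (ovi (ModuleCat.of R A)).codRestrict E hmem
    have hf : Function.Injective f := fun x y h => ovi_inj (ModuleCat.of R A) (congrArg Subtype.val h)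
    have hg := Submodule.mkQ_surjective (LinearMap.range f)
    have he : Function.Exact f (LinearMap.range f).mkQ := LinearMap.exact_map_mkQ_range f
    obtain ⟨y, rfl⟩ := xt_ex1 (a ^ t) hf hg he (n+1) x (xt_inj0 _ _ _)
    obtain ⟨s, hs, h⟩ := ih (E ⧸ LinearMap.range f) (IsTors.of_surj _ hg (Gm_tors a)) t y
    refine ⟨s, hs, ?_⟩
    rw [xtRes_del, h, map_zero]

theorem IsLC_quot {a : Ideal R} {n : ℕ} (h : IsLC a (n+1) (A ⧸ Gm a A) C) :
    IsLC a (n+1) A C := by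
  obtain ⟨j, j1, j2, j3⟩ := h
  have hf : Function.Injective (Gm a A).subtype := Subtype.val_injective
  have hg := Submodule.mkQ_surjective (Gm a A)
  have he : Function.Exact (Gm a A).subtype (Gm a A).mkQ := LinearMap.exact_subtype_mkQ _
  refine ⟨fun t => j t ∘ₗ xtMap (a ^ t) (n+1) (Gm a A).mkQ, ?_, ?_, ?_⟩
  · intro s t h x
    rw [LinearMap.comp_apply, LinearMap.comp_apply, ← xtRes_map, j1]
    exact h
  · intro l
    obtain ⟨t, x, rfl⟩ := j2 l
    obtain ⟨s, hs, h⟩ := tors_van a (n+1) _ (Gm_tors (A := A) a) t (xtDel (a ^ t) (n+1) hf hg he x)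
    rw [xtRes_del] at h
    obtain ⟨y, hy⟩ := xt_ex3 _ hf hg he _ _ h
    refine ⟨s, y, ?_⟩
    rw [LinearMap.comp_apply, hy, j1]
    exact hs
  · intro t x hx
    obtain ⟨s, hs, h⟩ := j3 t _ hx
    rw [xtRes_map] at h
    obtain ⟨y, hy⟩ := xt_ex2 _ hf hg he _ _ h
    obtain ⟨s', hs', h'⟩ := tors_van a n _ (Gm_tors (A := A) a) s y
    refine ⟨s', hs.trans hs', ?_⟩
    rw [← xtRes_res (Ideal.pow_le_pow_right hs') (Ideal.pow_le_pow_right hs), ← hy, xtRes_map, h',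
      map_zero]

theorem xt_tf0 {a : Ideal R} [Module.Injective R B] (hB : Gm a B = ⊥) (t n : ℕ)
    (x : XT (a ^ t) n B) : x = 0 := by
  cases n with
  | succ n => exact xt_inj0 _ _ x
  | zero =>
    apply (xt0 _ _).map_eq_zero_iff.1
    apply Subtype.ext
    have : ((xt0 _ _ x : tb (a ^ t) B) : B) ∈ Gm a B := ⟨t, (xt0 _ _ x).2⟩
    rw [hB] at this
    exact this

theorem xtDel_bij {a : Ideal R} [Module.Injective R B] (hB : Gm a B = ⊥) {f : A →ₗ[R] B}
    {g : B →ₗ[R] C} (hf : Function.Injective f) (hg : Function.Surjective g)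
    (he : Function.Exact f g) (t n : ℕ) : Function.Bijective (xtDel (a ^ t) n hf hg he) := by
  constructor
  · rw [← LinearMap.ker_eq_bot, LinearMap.ker_eq_bot']
    intro x hx
    obtain ⟨y, rfl⟩ := xt_ex3 _ hf hg he _ _ hx
    rw [xt_tf0 hB t n y, map_zero]
  · intro x
    exact xt_ex1 _ hf hg he _ x (xt_tf0 hB t _ _)

theorem IsLC_shift {a : Ideal R} [Module.Injective R B] (hB : Gm a B = ⊥) {f : A →ₗ[R] B}
    {g : B →ₗ[R] C} (hf : Function.Injective f) (hg : Function.Surjective g)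
    (he : Function.Exact f g) {n : ℕ} {L : Type u} [AddCommGroup L] [Module R L]
    (h : IsLC a n C L) : IsLC a (n+1) A L := by
  obtain ⟨j, j1, j2, j3⟩ := h
  let D : ∀ t, XT (a ^ t) n C ≃ₗ[R] XT (a ^ t) (n+1) A := fun t =>
    LinearEquiv.ofBijective _ (xtDel_bij hB hf hg he t n)
  have hD : ∀ t x, D t x = xtDel (a ^ t) n hf hg he x := fun t x => rfl
  refine ⟨fun t => j t ∘ₗ (D t).symm.toLinearMap, ?_, ?_, ?_⟩
  · intro s t h x
    obtain ⟨x, rfl⟩ := (D s).surjective x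
    change j t ((D t).symm _) = j s ((D s).symm _)
    rw [LinearEquiv.symm_apply_apply, hD, xtRes_del, ← hD, LinearEquiv.symm_apply_apply, j1]
    exact h
  · intro l
    obtain ⟨t, x, rfl⟩ := j2 l
    refine ⟨t, D t x, ?_⟩
    change j t ((D t).symm _) = _
    rw [LinearEquiv.symm_apply_apply]
  · intro t x hx
    obtain ⟨x, rfl⟩ := (D t).surjective x
    change j t ((D t).symm _) = _ at hx
    rw [LinearEquiv.symm_apply_apply] at hx
    obtain ⟨s, hs, h⟩ := j3 t _ hx
    refine ⟨s, hs, ?_⟩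
    rw [hD, xtRes_del, h, map_zero]

end
end Cof

namespace Cof
open CategoryTheory Abelian
section
variable {R : Type u} [CommRing R] [IsNoetherianRing R]

theorem EF0_of_tf {a : Ideal R} {A : Type u} [AddCommGroup A] [Module R A] (h : Gm a A = ⊥) :
    EF a 0 A := by
  rw [EF0_iff]
  have : tb a A = ⊥ := by
    rw [eq_bot_iff, ← h]
    intro x hx
    exact ⟨1, by rwa [pow_one]⟩
  rw [this]
  infer_instance

theorem shift_exists (a : Ideal R) (M : ModuleCat.{u} R) : ∃ M' : ModuleCat.{u} R,
    (∀ (k : ℕ) (L : Type u) [AddCommGroup L] [Module R L], IsLC a k M' L → IsLC a (k+1) M L) ∧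
    (∀ p, EF a (p+1) (M ⧸ Gm a M) → EF a p M') ∧
    (∀ p, EF a p M' → EF a (p+1) (M ⧸ Gm a M)) := by
  let T := ModuleCat.of R (M ⧸ Gm a M)
  have hT : Gm a T = ⊥ := Gm_quot a
  have := ov_injective T
  let G := ov T ⧸ Gm a (ov T)
  have hG : Module.Injective R G := Gq_injective a
  have hG0 : Gm a G = ⊥ := Gm_quot a
  let f : T →ₗ[R] G := (Gm a (ov T)).mkQ ∘ₗ ovi T
  have hf : Function.Injective f := by
    rw [← LinearMap.ker_eq_bot, LinearMap.ker_eq_bot']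
    intro x hx
    have hx : (Gm a (ov T)).mkQ (ovi T x) = 0 := hx
    rw [Submodule.mkQ_apply, Submodule.Quotient.mk_eq_zero] at hx
    obtain ⟨t, ht⟩ := hx
    have : x ∈ Gm a T := ⟨t, fun r hr => ovi_inj T (by rw [map_smul, ht r hr, map_zero])⟩
    rw [hT] at this
    exact this
  have hg := Submodule.mkQ_surjective (LinearMap.range f)
  have he : Function.Exact f (LinearMap.range f).mkQ := LinearMap.exact_map_mkQ_range f
  have hEG : ∀ p, EF a p G := by
    intro p
    cases p with
    | zero => exact EF0_of_tf hG0
    | succ p => exact EF.of_injective a p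
  refine ⟨ModuleCat.of R (G ⧸ LinearMap.range f), ?_, ?_, ?_⟩
  · intro k L _ _ h
    exact IsLC_quot (IsLC_shift hG0 hf hg he h)
  · intro p h
    exact EF.right a hf hg he (hEG p) h
  · intro p h
    exact EF.left a hf hg he h (hEG (p+1))

/-- parity induction -/
theorem parity (a : Ideal R) (hD : ∀ p : PrimeSpectrum R, a ≤ p.asIdeal → p ∈ dimSet R 3) (n : ℕ) :
    ∀ (M : ModuleCat.{u} R), (∀ p, EF a p M) →
    (∀ i : ℕ, ∃ L : ModuleCat.{u} R, IsLC a (2*i+1) M L ∧ ∀ p, EF a p L) →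
    ∃ L : ModuleCat.{u} R, IsLC a n M L ∧ IsTors a L ∧ ∀ p, EF a p L := by
  induction n using Nat.strong_induction_on with
  | _ n ih =>
  intro M hM ho
  obtain ⟨M', h1, h2, h3⟩ := shift_exists a M
  have hf : Function.Injective (Gm a M).subtype := Subtype.val_injective
  have hg := Submodule.mkQ_surjective (Gm a M)
  have he : Function.Exact (Gm a M).subtype (Gm a M).mkQ := LinearMap.exact_subtype_mkQ _
  have hG' : ∀ p, EF a p (Gm a M') := by
    obtain ⟨L, hL, hL'⟩ := ho 0
    obtain ⟨e⟩ := hL.uniq (h1 0 _ (IsLC_zero a))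
    exact fun p => (hL' p).equiv a p e
  have hM'0 : EF a 0 M' := by
    refine EF.mid a (f := (Gm a M').subtype) (g := (Gm a M').mkQ) Subtype.val_injective
      (Submodule.mkQ_surjective _) (LinearMap.exact_subtype_mkQ _) (hG' 0) (EF0_of_tf (Gm_quot a))
  have hN : ∀ p, EF a p (Gm a M) := by
    refine Pd a 2 _ (Gm_tors a) hD ?_
    intro i hi
    interval_cases i
    · have := (EF0_iff a).1 (hM 0)
      exact (EF0_iff a).2 (Module.Finite.of_injective _ (tbMap_inj a _ hf))
    · exact EF.left a hf hg he (EF0_of_tf (Gm_quot a)) (hM 1)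
    · exact EF.left a hf hg he (h3 0 hM'0) (hM 2)
  have hM' : ∀ p, EF a p M' := fun p => h2 p (EF.right a hf hg he (hM (p+1)) (hN (p+2)))
  match n, ih with
  | 0, _ => exact ⟨ModuleCat.of R (Gm a M), IsLC_zero a, Gm_tors a, hN⟩
  | 1, _ => exact ⟨ModuleCat.of R (Gm a M'), h1 0 _ (IsLC_zero a), Gm_tors a, hG'⟩
  | n+2, ih =>
    obtain ⟨M'', k1, k2, k3⟩ := shift_exists a M'
    have hf' : Function.Injective (Gm a M').subtype := Subtype.val_injective
    have hg' := Submodule.mkQ_surjective (Gm a M')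
    have he' : Function.Exact (Gm a M').subtype (Gm a M').mkQ := LinearMap.exact_subtype_mkQ _
    have hM'' : ∀ p, EF a p M'' := fun p => k2 p (EF.right a hf' hg' he' (hM' (p+1)) (hG' (p+2)))
    obtain ⟨L, hL, hL'⟩ := ih n (by omega) M'' hM'' (by
      intro i
      refine ⟨_, IsLC_lc a (2*i+1) M'', ?_⟩
      obtain ⟨L, hL, hL'⟩ := ho (i+1)
      obtain ⟨e⟩ := hL.uniq (h1 _ _ (k1 _ _ (IsLC_lc a (2*i+1) M'')))
      exact fun p => (hL' p).equiv a p e)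
    exact ⟨L, h1 _ _ (k1 _ _ hL), hL'⟩

theorem supp_of_tors {a : Ideal R} {A : Type u} [AddCommGroup A] [Module R A] (h : IsTors a A) :
    Module.support R A ⊆ PrimeSpectrum.zeroLocus (a : Set R) := by
  intro p hp
  rw [Module.mem_support_iff'] at hp
  obtain ⟨m, hm⟩ := hp
  obtain ⟨t, ht⟩ := h m
  intro r hr
  by_contra hrp
  exact hm (r ^ t) (fun hh => hrp (p.2.mem_of_pow_mem t hh)) (ht _ (Ideal.pow_mem_pow hr t))

theorem dimSet_of_krull {a : Ideal R} (h : ringKrullDim (R ⧸ a) = 2) (p : PrimeSpectrum R)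
    (hp : a ≤ p.asIdeal) : p ∈ dimSet R 3 := by
  change Order.coheight p < _
  suffices h : (Order.coheight p) ≤ 2 from lt_of_le_of_lt h (by decide)
  refine Order.coheight_le ?_
  intro l hl
  have hmem : ∀ i, a ≤ (l i).asIdeal := fun i =>
    hp.trans ((congrArg PrimeSpectrum.asIdeal hl).symm.le.trans (l.head_le i))
  let l' : LTSeries (PrimeSpectrum (R ⧸ a)) :=
    { length := l.length
      toFun := fun i => ⟨(l i).asIdeal.map (Ideal.Quotient.mk a),
        Ideal.map_isPrime_of_surjective Ideal.Quotient.mk_surjective (by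
          rw [Ideal.mk_ker]; exact hmem i)⟩
      step := fun i => by
        have h1 := l.step i
        have hc : ∀ j, ((l j).asIdeal.map (Ideal.Quotient.mk a)).comap (Ideal.Quotient.mk a) =
            (l j).asIdeal := fun j => by
          rw [Ideal.comap_map_of_surjective' _ Ideal.Quotient.mk_surjective, Ideal.mk_ker,
            sup_eq_left]
          exact hmem j
        refine lt_of_le_not_ge (Ideal.map_mono h1.le) (fun h2 => ?_)
        have h3 := Ideal.comap_mono (f := Ideal.Quotient.mk a) h2
        have h4 := (hc _).symm.le.trans (h3.trans (hc _).le)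
        exact absurd h4 (not_le_of_gt h1) }
  have h5 : (l'.length : WithBot ℕ∞) ≤ 2 := h ▸ Order.LTSeries.length_le_krullDim l'
  exact_mod_cast h5

end
end Cof

theorem stmt4 {R : Type u} [CommRing R] [IsNoetherianRing R] (a : Ideal R) (ha : a ≠ ⊤)
    (hdim : ringKrullDim (R ⧸ a) = 2) (M : ModuleCat.{u} R) (hfg : Module.Finite R M)
    (hodd : ∀ i : ℕ, IsCofinite a ((localCohomology a (2 * i + 1)).obj M)) :
    ∀ i : ℕ, IsCofinite a ((localCohomology a i).obj M) := by
  intro i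
  have hEF : ∀ (N : ModuleCat.{u} R) (k : ℕ), Module.Finite R (extQuot a k N) ↔ Cof.EF a k N := by
    intro N k
    have e : extQuot a k N ≃ₗ[R] Cof.XT a k N := Cof.oe k (ModuleCat.of R (R ⧸ a)) N
    exact ⟨fun h => Module.Finite.equiv e, fun h => by
      have h' : Module.Finite R (Cof.XT a k N) := h
      exact Module.Finite.equiv e.symm⟩
  obtain ⟨L, hL, hT, hE⟩ := Cof.parity a (Cof.dimSet_of_krull hdim) i M
    (Cof.EF.of_finite a hfg) (fun k => ⟨_, Cof.IsLC_lc a (2 * k + 1) M,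
      fun p => (hEF _ p).1 ((hodd k).2 p)⟩)
  obtain ⟨e⟩ := hL.uniq (Cof.IsLC_lc a i M)
  refine ⟨Cof.supp_of_tors (hT.of_inj e.symm.toLinearMap e.symm.injective), fun k => ?_⟩
  exact (hEF _ k).2 ((hE k).equiv a k e)
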